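/- arXiv:math/0608328 — 3 statements merged into one kernel-verified Lean document; each statement's English description precedes it below -/
import Mathlib

section
/- Let p be a prime, let r be an integer, and let m,n be nonnegative integers with m ≠ n and m ≡ n (mod p−1). Then (F_p(pm+p−1,r) − F_p(pn+p−1,r))/(p(m−n)) ≡ ((−1)^{n^*}/n^*!)·(Σ_{k=1}^{n^*−1} (B_k(−r)/k)·B_{n^*−k}(−r) − H_{n^*−1}·B_{n^*}(−r)) (mod p), where B_j(t) denotes the j-th Bernoulli polynomial. -/
open Finset

/-- `x ≡ y (mod p^c)` for rationals: `x = y` or the `p`-adic valuation of `x - y`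
is at least `c`. -/
def modCong (p : ℕ) (c : ℤ) (x y : ℚ) : Prop :=
  x = y ∨ c ≤ padicValRat p (x - y)

/-- `C_p(n,r) = ∑_{0 ≤ k ≤ n, k ≡ r (mod p)} (-1)^k * binom(n,k)`. -/
def Cp (p n : ℕ) (r : ℤ) : ℚ :=
  ∑ k ∈ range (n+1), if ((k : ℤ) - r) % p = 0 then (-1 : ℚ)^k * (n.choose k) else 0

/-- The Fleck quotient `F_p(n,r) = (-p)^{-⌊(n-1)/(p-1)⌋} C_p(n,r) + [n = 0]`. -/
noncomputable def Fp (p n : ℕ) (r : ℤ) : ℚ :=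
  (-(p:ℚ)) ^ (-(Int.fdiv ((n:ℤ) - 1) ((p:ℤ) - 1))) * Cp p n r + (if n = 0 then 1 else 0)

/-- `n^*`: the unique integer in `{0,…,p-2}` with `n^* ≡ -n (mod p-1)`. -/
def nUp (p n : ℕ) : ℕ := ((-(n:ℤ)) % ((p:ℤ) - 1)).toNat

/-- Harmonic number `H_r = ∑_{k=1}^r 1/k`. -/
def harm (r : ℕ) : ℚ := ∑ k ∈ Finset.Icc 1 r, 1/(k:ℚ)

theorem harm_succ (n : ℕ) : harm (n + 1) = harm n + 1 / ((n : ℚ) + 1) := by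
  unfold harm
  rw [Finset.sum_Icc_succ_top (by omega)]
  push_cast
  rfl

theorem harm_eq_sum_range (n : ℕ) : harm n = ∑ i ∈ range n, 1 / ((i : ℚ) + 1) := by
  induction n with
  | zero => simp [harm]
  | succ n ih => rw [harm_succ, ih, Finset.sum_range_succ]

namespace Polynomial

/-- The difference of the two sides of the Miki-Gessel identity of weight `n + 1`. -/
noncomputable def mikiDefect (n : ℕ) : ℚ[X] :=
  ∑ i ∈ range n, C (1 / ((i : ℚ) + 1)) * (bernoulli (i + 1) * bernoulli (n - i))
    - C (harm n) * bernoulli (n + 1)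
    - ∑ i ∈ range n, C (((n + 1).choose (i + 2) : ℚ) * _root_.bernoulli (i + 2) / ((i : ℚ) + 2)) *
        bernoulli (n - 1 - i)

theorem derivative_mikiDefect_succ (n : ℕ) :
    derivative (mikiDefect (n + 1)) = ((n : ℚ[X]) + 2) * mikiDefect n := by
  have htel : ∑ i ∈ range (n + 1), (bernoulli i * bernoulli (n + 1 - i)
      - bernoulli (i + 1) * bernoulli (n + 1 - (i + 1)) : ℚ[X]) = 0 := by
    rw [Finset.sum_range_sub']
    simp [mul_comm]
  have h1 : derivative (∑ i ∈ range (n + 1),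
      C (1 / ((i : ℚ) + 1)) * (bernoulli (i + 1) * bernoulli (n + 1 - i))) =
      ((n : ℚ[X]) + 2) * (∑ i ∈ range n, C (1 / ((i : ℚ) + 1)) *
        (bernoulli (i + 1) * bernoulli (n - i)) + C (1 / ((n : ℚ) + 1)) * bernoulli (n + 1)) := by
    have hlast : C (1 / ((n : ℚ) + 1)) * bernoulli (n + 1)
        = C (1 / ((n : ℚ) + 1)) * (bernoulli (n + 1) * bernoulli (n - n)) := by simp
    rw [hlast, ← Finset.sum_range_succ (fun i => C (1 / ((i : ℚ) + 1)) *
        (bernoulli (i + 1) * bernoulli (n - i))), ← sub_eq_zero, ← htel, derivative_sum,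
      Finset.mul_sum, ← Finset.sum_sub_distrib]
    refine Finset.sum_congr rfl fun i hi => ?_
    obtain ⟨j, rfl⟩ : ∃ j, n = i + j := ⟨n - i, by simp at hi; omega⟩
    have e1 : i + j + 1 - i = j + 1 := by omega
    have e2 : i + j - i = j := by omega
    have e3 : i + j + 1 - (i + 1) = j := by omega
    have hc : C (1 / ((i : ℚ) + 1)) * ((i : ℚ[X]) + 1) = 1 := by
      have : ((i : ℚ[X]) + 1) = C ((i : ℚ) + 1) := by simp
      rw [this, ← C_mul, one_div_mul_cancel (by positivity), C_1]
    rw [e1, e2, e3, derivative_C_mul, derivative_mul, derivative_bernoulli_add_one,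
      derivative_bernoulli_add_one]
    push_cast
    linear_combination (bernoulli i * bernoulli (j + 1) - bernoulli (i + 1) * bernoulli j) * hc
  have h2 : derivative (∑ i ∈ range (n + 1),
      C (((n + 1 + 1).choose (i + 2) : ℚ) * _root_.bernoulli (i + 2) / ((i : ℚ) + 2)) *
        bernoulli (n + 1 - 1 - i)) =
      ((n : ℚ[X]) + 2) * ∑ i ∈ range n,
        C (((n + 1).choose (i + 2) : ℚ) * _root_.bernoulli (i + 2) / ((i : ℚ) + 2)) *
        bernoulli (n - 1 - i) := by
    rw [Finset.sum_range_succ, derivative_add, derivative_sum, Finset.mul_sum]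
    have : derivative (C (((n + 1 + 1).choose (n + 2) : ℚ) * _root_.bernoulli (n + 2)
        / ((n : ℚ) + 2)) * bernoulli (n + 1 - 1 - n)) = 0 := by
      simp
    rw [this, add_zero]
    refine Finset.sum_congr rfl fun i hi => ?_
    obtain ⟨j, rfl⟩ : ∃ j, n = i + j + 1 := ⟨n - i - 1, by simp at hi; omega⟩
    have e1 : i + j + 1 + 1 - 1 - i = j + 1 := by omega
    have e2 : i + j + 1 - 1 - i = j := by omega
    have hch : ((i + j + 1 + 1 + 1).choose (i + 2) : ℚ) * ((j : ℚ) + 1)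
        = ((i : ℚ) + j + 3) * ((i + j + 1 + 1).choose (i + 2) : ℚ) := by
      have := Nat.choose_mul_succ_eq (i + j + 2) (i + 2)
      have e : i + j + 2 + 1 - (i + 2) = j + 1 := by omega
      rw [e] at this
      have := congrArg (Nat.cast (R := ℚ)) this
      push_cast at this
      linear_combination -this
    rw [e1, e2, derivative_C_mul, derivative_bernoulli_add_one]
    have : C (((i + j + 1 + 1 + 1).choose (i + 2) : ℚ) * _root_.bernoulli (i + 2) / ((i : ℚ) + 2))
        * ((j : ℚ[X]) + 1) = (((i + j + 1 : ℕ) : ℚ[X]) + 2) *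
        C (((i + j + 1 + 1).choose (i + 2) : ℚ) * _root_.bernoulli (i + 2) / ((i : ℚ) + 2)) := by
      have ej : ((j : ℚ[X]) + 1) = C ((j : ℚ) + 1) := by simp
      have en : (((i + j + 1 : ℕ) : ℚ[X]) + 2) = C ((i : ℚ) + j + 3) := by
        simp only [map_add, map_natCast, map_ofNat]
        push_cast
        ring
      rw [ej, en, ← C_mul, ← C_mul]
      congr 1
      linear_combination (_root_.bernoulli (i + 2) / ((i : ℚ) + 2)) * hch
    rw [← mul_assoc, this, mul_assoc]
  unfold mikiDefect
  rw [derivative_sub, derivative_sub, h1, h2, derivative_C_mul, derivative_bernoulli_add_one,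
    harm_succ, C_add]
  push_cast
  ring

theorem sum_range_choose_hockey (n l : ℕ) : ∑ i ∈ range n, i.choose l = n.choose (l + 1) := by
  induction n with
  | zero => simp
  | succ n ih => rw [Finset.sum_range_succ, ih, Nat.choose_succ_succ, add_comm]

theorem sum_eval_bernoulli_sub_pow (n : ℕ) (x : ℚ) :
    ∑ i ∈ range n, (1 / ((i : ℚ) + 1)) * ((bernoulli (i + 1)).eval x - x ^ (i + 1))
        * x ^ (n - 1 - i)
      = ∑ l ∈ range n, (n.choose (l + 1) : ℚ) * _root_.bernoulli (l + 1) / ((l : ℚ) + 1)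
        * x ^ (n - 1 - l) := by
  have hB (i : ℕ) (hi : i < n) : (bernoulli (i + 1)).eval x - x ^ (i + 1)
      = ∑ l ∈ range n, _root_.bernoulli (l + 1) * ((i + 1).choose (l + 1) : ℚ) * x ^ (i - l) := by
    have hsub : range (i + 1) ⊆ range n := Finset.range_subset_range.2 hi
    rw [← Finset.sum_subset hsub]
    · rw [Polynomial.bernoulli, Polynomial.eval_finsetSum, Finset.sum_range_succ']
      simp [eval_monomial]
    · intro l _ hl
      simp only [Finset.mem_range, not_lt] at hl
      rw [Nat.choose_eq_zero_of_lt (by omega)]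
      simp
  have hterm (i : ℕ) (hi : i ∈ range n) :
      (1 / ((i : ℚ) + 1)) * ((bernoulli (i + 1)).eval x - x ^ (i + 1)) * x ^ (n - 1 - i)
      = ∑ l ∈ range n, (i.choose l : ℚ) * (_root_.bernoulli (l + 1) / ((l : ℚ) + 1)
        * x ^ (n - 1 - l)) := by
    rw [Finset.mem_range] at hi
    rw [hB i hi, Finset.mul_sum, Finset.sum_mul]
    refine Finset.sum_congr rfl fun l hl => ?_
    rcases lt_or_ge i l with hil | hil
    · rw [Nat.choose_eq_zero_of_lt hil, Nat.choose_eq_zero_of_lt (by omega)]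
      simp
    · have hch := congrArg (Nat.cast (R := ℚ)) (Nat.add_one_mul_choose_eq i l)
      push_cast at hch
      have hx : x ^ (n - 1 - l) = x ^ (i - l) * x ^ (n - 1 - i) := by
        rw [← pow_add]
        congr 1
        omega
      rw [hx]
      have h1 : (i : ℚ) + 1 ≠ 0 := by positivity
      have h2 : (l : ℚ) + 1 ≠ 0 := by positivity
      field_simp
      linear_combination -(_root_.bernoulli (l + 1) * x ^ (i - l) * x ^ (n - 1 - i)) * hch
  rw [Finset.sum_congr rfl hterm, Finset.sum_comm]
  refine Finset.sum_congr rfl fun l _ => ?_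
  rw [← Finset.sum_mul, ← Nat.cast_sum, sum_range_choose_hockey]
  ring

theorem eval_one_add_mikiDefect (n : ℕ) (x : ℚ) :
    (mikiDefect n).eval (1 + x) = (mikiDefect n).eval x := by
  obtain _ | n := n
  · simp [mikiDefect, harm]
  have hconv : ∑ i ∈ range (n + 1), (1 / ((i : ℚ) + 1)) *
        ((bernoulli (i + 1)).eval (1 + x) * (bernoulli (n + 1 - i)).eval (1 + x))
      - ∑ i ∈ range (n + 1), (1 / ((i : ℚ) + 1)) *
        ((bernoulli (i + 1)).eval x * (bernoulli (n + 1 - i)).eval x)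
      = ((n : ℚ) + 2) * ∑ i ∈ range (n + 1), (1 / ((i : ℚ) + 1)) *
          ((bernoulli (i + 1)).eval x - x ^ (i + 1)) * x ^ (n - i)
        + ((n : ℚ) + 2) * harm (n + 1) * x ^ (n + 1)
        + ((n : ℚ) + 1) * (n + 2) / 2 * x ^ n := by
    have hrefl : ∑ i ∈ range (n + 1), x ^ (n - i) * (bernoulli (i + 1)).eval x
        = ∑ i ∈ range (n + 1), x ^ i * (bernoulli (n + 1 - i)).eval x := by
      rw [← Finset.sum_range_reflect]
      refine Finset.sum_congr rfl fun i hi => ?_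
      have : i ≤ n := by simp at hi; omega
      congr 3 <;> omega
    have hgauss : ∑ i ∈ range (n + 1), ((n : ℚ) + 1 - i) = ((n : ℚ) + 1) * (n + 2) / 2 := by
      have := Finset.sum_range_id_mul_two (n + 1)
      have := congrArg (Nat.cast (R := ℚ)) this
      push_cast at this
      rw [Finset.sum_sub_distrib]
      simp
      linarith
    rw [← hgauss, harm_eq_sum_range, Finset.mul_sum, Finset.mul_sum, Finset.sum_mul,
      Finset.sum_mul, ← Finset.sum_sub_distrib, ← sub_eq_zero, ← sub_eq_zero.2 hrefl.symm,
      ← Finset.sum_add_distrib, ← Finset.sum_add_distrib, ← Finset.sum_sub_distrib,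
      ← Finset.sum_sub_distrib]
    refine Finset.sum_congr rfl fun i hi => ?_
    obtain ⟨j, rfl⟩ : ∃ j, n = i + j := ⟨n - i, by simp at hi; omega⟩
    have e1 : i + j + 1 - i = j + 1 := by omega
    have e2 : i + j - i = j := by omega
    rw [e1, e2, bernoulli_eval_one_add, bernoulli_eval_one_add]
    have h1 : (i : ℚ) + 1 ≠ 0 := by positivity
    simp only [Nat.add_sub_cancel]
    push_cast
    field_simp
    ring
  have hlin : ∑ i ∈ range (n + 1), ((n + 1 + 1).choose (i + 2) : ℚ) * _root_.bernoulli (i + 2)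
        / ((i : ℚ) + 2) * (bernoulli (n + 1 - 1 - i)).eval (1 + x)
      - ∑ i ∈ range (n + 1), ((n + 1 + 1).choose (i + 2) : ℚ) * _root_.bernoulli (i + 2)
        / ((i : ℚ) + 2) * (bernoulli (n + 1 - 1 - i)).eval x
      = ((n : ℚ) + 2) * ∑ i ∈ range n, ((n + 1).choose (i + 2) : ℚ) * _root_.bernoulli (i + 2)
        / ((i : ℚ) + 2) * x ^ (n - 1 - i) := by
    rw [← Finset.sum_sub_distrib, Finset.sum_range_succ, Finset.mul_sum]
    simp only [Nat.add_sub_cancel, Nat.sub_self, bernoulli_zero, eval_one, sub_self, add_zero]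
    refine Finset.sum_congr rfl fun i hi => ?_
    obtain ⟨j, rfl⟩ : ∃ j, n = i + j + 1 := ⟨n - i - 1, by simp at hi; omega⟩
    have e1 : i + j + 1 - i = j + 1 := by omega
    have e2 : i + j + 1 - 1 - i = j := by omega
    have hch := Nat.choose_mul_succ_eq (i + j + 2) (i + 2)
    have e : i + j + 2 + 1 - (i + 2) = j + 1 := by omega
    rw [e] at hch
    have hch := congrArg (Nat.cast (R := ℚ)) hch
    push_cast at hch
    rw [e1, e2, bernoulli_eval_one_add]
    simp only [Nat.add_sub_cancel]
    push_cast
    linear_combination -(_root_.bernoulli (i + 2) / ((i : ℚ) + 2) * x ^ j) * hch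
  have hsum := sum_eval_bernoulli_sub_pow (n + 1) x
  rw [Finset.sum_range_succ' (fun l => ((n + 1).choose (l + 1) : ℚ) * _root_.bernoulli (l + 1)
    / ((l : ℚ) + 1) * x ^ (n + 1 - 1 - l))] at hsum
  simp only [Nat.add_sub_cancel, zero_add, Nat.choose_one_right, _root_.bernoulli_one,
    Nat.sub_zero, Nat.cast_zero, div_one] at hsum
  have hre : ∑ l ∈ range n, ((n + 1).choose (l + 1 + 1) : ℚ) * _root_.bernoulli (l + 1 + 1)
        / (((l + 1 : ℕ) : ℚ) + 1) * x ^ (n - (l + 1))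
      = ∑ i ∈ range n, ((n + 1).choose (i + 2) : ℚ) * _root_.bernoulli (i + 2)
        / ((i : ℚ) + 2) * x ^ (n - 1 - i) := by
    refine Finset.sum_congr rfl fun i _ => ?_
    rw [Nat.sub_sub, add_comm 1 i]
    push_cast
    ring_nf
  rw [hre] at hsum
  simp only [mikiDefect, eval_sub, eval_finsetSum, eval_mul, eval_C]
  have hB := bernoulli_eval_one_add (n + 1 + 1) x
  simp only [Nat.add_sub_cancel] at hB
  rw [hB]
  simp only [Nat.add_sub_cancel] at hlin
  push_cast at hsum ⊢
  linear_combination hconv - hlin + ((n : ℚ) + 2) * hsum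

theorem mikiDefect_eq_zero (n : ℕ) : mikiDefect n = 0 := by
  have hper (k : ℕ) : (mikiDefect (n + 1)).eval (k : ℚ) = (mikiDefect (n + 1)).eval 0 := by
    induction k with
    | zero => simp
    | succ k ih => rw [Nat.cast_succ, add_comm, eval_one_add_mikiDefect, ih]
  have hconst : mikiDefect (n + 1) = C ((mikiDefect (n + 1)).eval 0) := by
    refine Polynomial.eq_of_infinite_eval_eq _ _ (Set.infinite_of_injective_forall_mem
      (f := fun k : ℕ => (k : ℚ)) Nat.cast_injective fun k => ?_)
    simp [hper]
  have hder := derivative_mikiDefect_succ n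
  rw [hconst, derivative_C] at hder
  have h2 : ((n : ℚ[X]) + 2) ≠ 0 := by
    have : ((n + 2 : ℕ) : ℚ[X]) ≠ 0 := Nat.cast_ne_zero.2 (by omega)
    exact_mod_cast this
  exact (mul_eq_zero.1 hder.symm).resolve_left h2

/-- The Miki-Gessel identity. -/
theorem miki_gessel (s : ℕ) (x : ℚ) :
    ∑ k ∈ Icc 1 (s - 1), (bernoulli k).eval x / (k : ℚ) * (bernoulli (s - k)).eval x
        - harm (s - 1) * (bernoulli s).eval x
      = ∑ k ∈ Icc 2 s, (s.choose k : ℚ) * _root_.bernoulli k / k * (bernoulli (s - k)).eval x := by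
  obtain _ | n := s
  · simp [harm]
  have h := congrArg (eval x) (mikiDefect_eq_zero n)
  simp only [mikiDefect, eval_sub, eval_finsetSum, eval_mul, eval_C, eval_zero] at h
  rw [← Finset.Ico_add_one_right_eq_Icc, ← Finset.Ico_add_one_right_eq_Icc,
    Finset.sum_Ico_eq_sum_range, Finset.sum_Ico_eq_sum_range]
  have e : n + 1 + 1 - 2 = n := by omega
  rw [Nat.add_sub_cancel, Nat.add_sub_cancel, e, ← sub_eq_zero, ← h]
  refine congrArg₂ _ (congrArg₂ _ ?_ rfl) ?_
  · refine Finset.sum_congr rfl fun i _ => ?_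
    have e : n + 1 - (1 + i) = n - i := by omega
    rw [e, add_comm 1 i]
    push_cast
    ring
  · refine Finset.sum_congr rfl fun i _ => ?_
    have e : n + 1 - (2 + i) = n - 1 - i := by omega
    rw [e, add_comm 2 i]
    push_cast
    ring

end Polynomial

/-- The rational number `q` is `p`-integral with residue class `a` modulo `p`. -/
def IsReduction (p : ℕ) (q : ℚ) (a : ZMod p) : Prop :=
  ∃ n d : ℤ, (d : ZMod p) ≠ 0 ∧ q * d = n ∧ a * d = n

namespace IsReduction

variable {p : ℕ} [Fact p.Prime] {x y : ℚ} {a b : ZMod p}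

theorem add (hx : IsReduction p x a) (hy : IsReduction p y b) :
    IsReduction p (x + y) (a + b) := by
  obtain ⟨n, d, hd, h1, h2⟩ := hx
  obtain ⟨n', d', hd', h1', h2'⟩ := hy
  refine ⟨n * d' + n' * d, d * d', by push_cast; exact mul_ne_zero hd hd', ?_, ?_⟩ <;> push_cast
  · linear_combination (d' : ℚ) * h1 + (d : ℚ) * h1'
  · linear_combination (d' : ZMod p) * h2 + (d : ZMod p) * h2'

theorem mul (hx : IsReduction p x a) (hy : IsReduction p y b) :
    IsReduction p (x * y) (a * b) := by
  obtain ⟨n, d, hd, h1, h2⟩ := hx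
  obtain ⟨n', d', hd', h1', h2'⟩ := hy
  refine ⟨n * n', d * d', by push_cast; exact mul_ne_zero hd hd', ?_, ?_⟩ <;> push_cast
  · rw [← h1, ← h1']; ring
  · rw [← h2, ← h2']; ring

theorem intCast (n : ℤ) : IsReduction p n n := ⟨n, 1, by simp, by simp, by simp⟩

theorem natCast (n : ℕ) : IsReduction p n n := ⟨n, 1, by simp, by simp, by simp⟩

theorem neg (hx : IsReduction p x a) : IsReduction p (-x) (-a) := by
  simpa using (intCast (-1)).mul hx

theorem sub (hx : IsReduction p x a) (hy : IsReduction p y b) :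
    IsReduction p (x - y) (a - b) := by
  simpa [sub_eq_add_neg] using hx.add hy.neg

theorem pow (hx : IsReduction p x a) (n : ℕ) : IsReduction p (x ^ n) (a ^ n) := by
  induction n with
  | zero => simpa using intCast (p := p) 1
  | succ n ih => simpa [pow_succ] using ih.mul hx

theorem sum {ι : Type*} (s : Finset ι) (f : ι → ℚ) (g : ι → ZMod p)
    (h : ∀ i ∈ s, IsReduction p (f i) (g i)) : IsReduction p (∑ i ∈ s, f i) (∑ i ∈ s, g i) := by
  classical
  induction s using Finset.induction_on with
  | empty => simpa using intCast (p := p) 0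
  | insert i s hi ih =>
    rw [Finset.sum_insert hi, Finset.sum_insert hi]
    exact (h i (by simp)).add (ih fun j hj => h j (by simp [hj]))

theorem inv_intCast {n : ℤ} (hn : (n : ZMod p) ≠ 0) :
    IsReduction p (n : ℚ)⁻¹ (n : ZMod p)⁻¹ := by
  have h0 : (n : ℚ) ≠ 0 := by
    rintro h
    exact hn (by rw [Int.cast_eq_zero.1 h, Int.cast_zero])
  exact ⟨1, n, hn, by simp [h0], by simp [hn]⟩

theorem inv_natCast {n : ℕ} (hn : (n : ZMod p) ≠ 0) :
    IsReduction p (n : ℚ)⁻¹ (n : ZMod p)⁻¹ := by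
  simpa using inv_intCast (n := (n : ℤ)) (by simpa using hn)

theorem modCong (hx : IsReduction p x a) (hy : IsReduction p y a) : modCong p 1 x y := by
  rcases eq_or_ne x y with hxy | hxy
  · exact Or.inl hxy
  right
  obtain ⟨n, d, hd, h1, h2⟩ := hx.sub hy
  rw [sub_self, zero_mul] at h2
  have hxy' : x - y ≠ 0 := sub_ne_zero.2 hxy
  have hd0 : (d : ℚ) ≠ 0 := by
    intro h
    exact hd (by rw [Int.cast_eq_zero.1 h, Int.cast_zero])
  have hn0 : n ≠ 0 := by
    rintro rfl
    simp [hxy', hd0] at h1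
  have hdv : padicValInt p d = 0 :=
    padicValInt.eq_zero_of_not_dvd fun h => hd ((ZMod.intCast_zmod_eq_zero_iff_dvd d p).2 h)
  have hnv : 1 ≤ padicValInt p n := by
    have hdvd : (p : ℤ) ∣ n := (ZMod.intCast_zmod_eq_zero_iff_dvd n p).1 h2.symm
    have := (padicValInt_dvd_iff (p := p) 1 n).1 (by simpa using hdvd)
    exact this.resolve_left hn0
  have hv := congrArg (padicValRat p) h1
  rw [padicValRat.mul hxy' hd0, padicValRat.of_int, padicValRat.of_int, hdv] at hv
  simp only [Nat.cast_zero, add_zero] at hv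
  rw [hv]
  exact_mod_cast hnv

end IsReduction

section TruncExp

open PowerSeries

variable (p : ℕ) [Fact p.Prime]

theorem natCast_ne_zero_of_pos_of_lt {k : ℕ} (h0 : 0 < k) (hk : k < p) : (k : ZMod p) ≠ 0 := by
  rw [Ne, ZMod.natCast_eq_zero_iff]
  exact Nat.not_dvd_of_pos_of_lt h0 hk

theorem natCast_factorial_ne_zero {k : ℕ} (hk : k < p) : (k.factorial : ZMod p) ≠ 0 := by
  rw [Ne, ZMod.natCast_eq_zero_iff, (Fact.out : p.Prime).dvd_factorial]
  omega

/-- The exponential series modulo `p`, truncated below degree `p`. -/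
noncomputable def truncExp : (ZMod p)⟦X⟧ := PowerSeries.mk fun n => (n.factorial : ZMod p)⁻¹

@[simp] theorem coeff_truncExp (n : ℕ) : coeff n (truncExp p) = (n.factorial : ZMod p)⁻¹ :=
  coeff_mk _ _

@[simp] theorem constantCoeff_truncExp : constantCoeff (truncExp p) = 1 := by
  rw [← coeff_zero_eq_constantCoeff_apply, coeff_truncExp]
  simp

theorem derivative_truncExp :
    (X : (ZMod p)⟦X⟧) ^ (p - 1) ∣ derivative (ZMod p) (truncExp p) - truncExp p := by
  rw [X_pow_dvd_iff]
  intro m hm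
  have h1 : ((m + 1 : ℕ) : ZMod p) ≠ 0 := natCast_ne_zero_of_pos_of_lt p (by omega) (by omega)
  have h2 := natCast_factorial_ne_zero p (k := m) (by omega)
  rw [map_sub, coeff_derivative, coeff_truncExp, coeff_truncExp, Nat.factorial_succ]
  push_cast at h1 ⊢
  field_simp
  ring

theorem coeff_truncExp_pow (m : ℕ) {j : ℕ} (hj : j < p) :
    coeff j (truncExp p ^ m) = (m : ZMod p) ^ j * (j.factorial : ZMod p)⁻¹ := by
  induction j with
  | zero => simp
  | succ j ih =>
    have h1 : ((j + 1 : ℕ) : ZMod p) ≠ 0 := natCast_ne_zero_of_pos_of_lt p (by omega) hj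
    have h2 := natCast_factorial_ne_zero p (k := j) (by omega)
    have hd : (X : (ZMod p)⟦X⟧) ^ (p - 1) ∣
        derivative (ZMod p) (truncExp p ^ m) - (m : (ZMod p)⟦X⟧) * truncExp p ^ m := by
      obtain _ | m := m
      · simp
      · have := (derivative_truncExp p).mul_left (((m + 1 : ℕ) : (ZMod p)⟦X⟧) * truncExp p ^ m)
        rw [derivative_pow]
        convert! this using 1
        simp only [Nat.add_sub_cancel]
        ring
    have := X_pow_dvd_iff.1 hd j (by omega)
    rw [map_sub, coeff_derivative, sub_eq_zero, ← map_natCast (C (R := ZMod p)), coeff_C_mul,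
      ih (by omega)] at this
    rw [Nat.factorial_succ]
    push_cast at h1 ⊢
    field_simp
    rw [this]
    field_simp
    ring

theorem X_pow_dvd_pow_sub_C (f : (ZMod p)⟦X⟧) : X ^ p ∣ f ^ p - C (constantCoeff f) := by
  have : CharP (ZMod p)⟦X⟧ p :=
    charP_of_injective_ringHom (C_injective (R := ZMod p)) p
  have h : X ∣ f - C (constantCoeff f) := by
    rw [X_dvd_iff]
    simp
  have := pow_dvd_pow_of_dvd h p
  rwa [sub_pow_char, ← map_pow, ZMod.pow_card] at this

/-- The ring homomorphism `ℤ[X] → (ZMod p)⟦X⟧` with `X ↦ exp X`, truncated. -/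
noncomputable def expSubst : Polynomial ℤ →+* (ZMod p)⟦X⟧ :=
  (Polynomial.aeval (R := ZMod p) (truncExp p)).toRingHom.comp
    (Polynomial.mapRingHom (Int.castRingHom (ZMod p)))

@[simp] theorem expSubst_X : expSubst p Polynomial.X = truncExp p := by simp [expSubst]

theorem derivative_expSubst (f : Polynomial ℤ) :
    derivative (ZMod p) (expSubst p f) =
      expSubst p (Polynomial.derivative f) * derivative (ZMod p) (truncExp p) := by
  simp [expSubst, Derivation.map_aeval, Polynomial.derivative_map]

theorem constantCoeff_expSubst (f : Polynomial ℤ) :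
    constantCoeff (expSubst p f) = ((f.eval 1 : ℤ) : ZMod p) := by
  have : (constantCoeff (R := ZMod p)).comp (expSubst p)
      = (Int.castRingHom (ZMod p)).comp (Polynomial.evalRingHom 1) :=
    Polynomial.ringHom_ext (fun a => by simp) (by simp)
  exact congrArg (fun g => g f) this

variable {p}

theorem isReduction_bernoulli_div_factorial {u : (ZMod p)⟦X⟧}
    (hu : X ^ p ∣ (1 - truncExp p) * u + X) {t : ℚ} {c : ℕ} (ht : IsReduction p t c) {j : ℕ}
    (hj : j + 2 ≤ p) :
    IsReduction p ((Polynomial.bernoulli j).eval t / (j.factorial : ℚ))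
      (coeff j (truncExp p ^ c * u)) := by
  induction j using Nat.strong_induction_on with
  | _ j ih =>
  set g := truncExp p ^ c * u with hg
  have hrecQ : (Polynomial.bernoulli j).eval t / (j.factorial : ℚ) = t ^ j * (j.factorial : ℚ)⁻¹
      - ∑ i ∈ range j, (Polynomial.bernoulli i).eval t / (i.factorial : ℚ)
        * (((j + 1 - i).factorial : ℕ) : ℚ)⁻¹ := by
    have h := congrArg (Polynomial.eval t) (Polynomial.sum_bernoulli j)
    rw [Polynomial.eval_finsetSum, Finset.sum_range_succ] at h
    simp only [Polynomial.eval_smul, Polynomial.eval_monomial,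
      Nat.choose_succ_self_right, smul_eq_mul] at h
    have hs : ∑ i ∈ range j, (Polynomial.bernoulli i).eval t / (i.factorial : ℚ)
        * (((j + 1 - i).factorial : ℕ) : ℚ)⁻¹ = ((j + 1).factorial : ℚ)⁻¹ *
        ∑ i ∈ range j, ((j + 1).choose i : ℚ) * (Polynomial.bernoulli i).eval t := by
      rw [Finset.mul_sum]
      refine Finset.sum_congr rfl fun i hi => ?_
      have hi' : i ≤ j + 1 := by simp at hi; omega
      rw [Nat.cast_choose ℚ hi']
      have h1 : ((j + 1).factorial : ℚ) ≠ 0 := by positivity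
      field_simp
    have hj0 : (j.factorial : ℚ) ≠ 0 := by positivity
    have hj1 : (j : ℚ) + 1 ≠ 0 := by positivity
    rw [hs, Nat.factorial_succ]
    push_cast at h ⊢
    field_simp
    linear_combination h
  have hrecP : coeff j g = (c : ZMod p) ^ j * (j.factorial : ZMod p)⁻¹
      - ∑ i ∈ range j, coeff i g * (((j + 1 - i).factorial : ℕ) : ZMod p)⁻¹ := by
    have h := X_pow_dvd_iff.1 (hu.mul_left (truncExp p ^ c)) (j + 1) (by omega)
    have e : truncExp p ^ c * ((1 - truncExp p) * u + X)
        = truncExp p ^ c * X - g * (truncExp p - 1) := by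
      rw [hg]; ring
    rw [e, map_sub, coeff_succ_mul_X, coeff_truncExp_pow p c (by omega), coeff_mul,
      Finset.Nat.sum_antidiagonal_eq_sum_range_succ_mk, Finset.sum_range_succ,
      Finset.sum_range_succ] at h
    have hs : ∑ i ∈ range j, coeff i g * coeff (j + 1 - i) (truncExp p - 1)
        = ∑ i ∈ range j, coeff i g * (((j + 1 - i).factorial : ℕ) : ZMod p)⁻¹ := by
      refine Finset.sum_congr rfl fun i hi => ?_
      have hi' : j + 1 - i ≠ 0 := by simp at hi; omega
      simp [coeff_one, hi']
    have e1 : j + 1 - j = 1 := by omega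
    rw [hs, e1] at h
    simp [coeff_one] at h
    linear_combination -h
  rw [hrecQ, hrecP]
  refine IsReduction.sub ((ht.pow j).mul (IsReduction.inv_natCast
    (natCast_factorial_ne_zero p (by omega)))) (IsReduction.sum _ _ _ fun i hi => ?_)
  rw [Finset.mem_range] at hi
  exact (ih i hi (by omega)).mul
    (IsReduction.inv_natCast (natCast_factorial_ne_zero p (by omega)))

end TruncExp

/-- Integral polynomials describing `1 - X` modulo `X ^ p - 1`: with `y = 1 - X` one has
`y ^ p = - p y U` and `U ^ p = 1 + p (Y - y U W ^ p)` modulo `X ^ p - 1`. -/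
structure FleckData (p : ℕ) where
  U : Polynomial ℤ
  W : Polynomial ℤ
  Y : Polynomial ℤ
  X_pow : (Polynomial.X : Polynomial ℤ) ^ p
    = 1 - (1 - Polynomial.X) ^ p - (p : Polynomial ℤ) * ((1 - Polynomial.X) * U)
  derivative_mul_U : Polynomial.derivative ((1 - Polynomial.X) * U)
    = (1 - Polynomial.X) ^ (p - 1) - Polynomial.X ^ (p - 1)
  U_eq : U = 1 + (1 - Polynomial.X) * W
  U_pow : U ^ p = 1 + ((1 - Polynomial.X) * W) ^ p + (p : Polynomial ℤ) * Y
  derivative_Y : Polynomial.derivative Y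
    = (U ^ (p - 1) - (U - 1) ^ (p - 1)) * Polynomial.derivative U
  eval_Y : Y.eval 1 = 0

open Polynomial in
theorem exists_fleckData {p : ℕ} (hp : p.Prime) (hodd : Odd p) : Nonempty (FleckData p) := by
  have hp0 : (p : ℤ[X]) ≠ 0 := Nat.cast_ne_zero.2 hp.ne_zero
  obtain ⟨U, hU⟩ := exists_add_pow_prime_eq hp (1 : ℤ[X]) (-(1 - X))
  have hX : (X : ℤ[X]) ^ p = 1 - (1 - X) ^ p - (p : ℤ[X]) * ((1 - X) * U) := by
    have e : (1 : ℤ[X]) + -(1 - X) = X := by ring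
    rw [e, hodd.neg_pow] at hU
    rw [hU]
    ring
  have hdU : derivative ((1 - X) * U) = (1 - X : ℤ[X]) ^ (p - 1) - X ^ (p - 1) := by
    have h := congrArg derivative hX
    rw [derivative_sub, derivative_sub, derivative_natCast_mul, derivative_X_pow, derivative_pow,
      derivative_sub, derivative_X, derivative_one] at h
    refine mul_left_cancel₀ hp0 ?_
    simp only [map_natCast] at h
    linear_combination h
  have hU1 : U.eval 1 = 1 := by
    have h := congrArg (eval 1) hdU
    have hp1 : p - 1 ≠ 0 := by have := hp.two_le; omega
    simp [derivative_mul, hp1] at h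
    linarith
  obtain ⟨W, hW⟩ : (1 - X : ℤ[X]) ∣ U - 1 := by
    have h : (X - C 1 : ℤ[X]) ∣ U - 1 := by
      rw [dvd_iff_isRoot]
      simp [hU1]
    obtain ⟨V, hV⟩ := h
    exact ⟨-V, by rw [hV, C_1]; ring⟩
  have hUW : U = 1 + (1 - X) * W := by linear_combination hW
  obtain ⟨V, hV⟩ := exists_add_pow_prime_eq hp (1 : ℤ[X]) ((1 - X) * W)
  have hUp : U ^ p = 1 + ((1 - X) * W) ^ p + (p : ℤ[X]) * ((1 - X) * W * V) := by
    rw [← hUW] at hV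
    rw [hV]
    ring
  refine ⟨⟨U, W, (1 - X) * W * V, hX, hdU, hUW, hUp, ?_, by simp⟩⟩
  rw [← hW] at hUp ⊢
  have h := congrArg derivative hUp
  rw [derivative_add, derivative_add, derivative_natCast_mul, derivative_pow, derivative_pow,
    derivative_sub, derivative_one] at h
  refine mul_left_cancel₀ hp0 ?_
  simp only [map_natCast] at h
  linear_combination -h

namespace FleckData

open PowerSeries

variable {p : ℕ} (D : FleckData p)

/-- The polynomial with `U ^ p = 1 + p Z` modulo `X ^ p - 1`. -/
noncomputable def Z : Polynomial ℤ := D.Y - (1 - Polynomial.X) * D.U * D.W ^ p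

variable [Fact p.Prime]

theorem constantCoeff_U : constantCoeff (expSubst p D.U) = 1 := by
  rw [constantCoeff_expSubst, D.U_eq]
  simp

theorem X_dvd_one_sub_truncExp : (X : (ZMod p)⟦X⟧) ∣ 1 - truncExp p := by
  rw [X_dvd_iff]
  simp

theorem X_pow_dvd_mul_U_add_X :
    (X : (ZMod p)⟦X⟧) ^ p ∣ (1 - truncExp p) * expSubst p D.U + X := by
  have hp := (Fact.out : p.Prime).two_le
  have hmap : (1 - truncExp p) * expSubst p D.U
      = expSubst p ((1 - Polynomial.X) * D.U) := by simp
  have hd : (X : (ZMod p)⟦X⟧) ^ (p - 1) ∣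
      derivative (ZMod p) ((1 - truncExp p) * expSubst p D.U + X) := by
    rw [map_add, derivative_X, hmap, derivative_expSubst, D.derivative_mul_U]
    simp only [map_sub, map_pow, map_one, expSubst_X]
    obtain ⟨a, ha⟩ := derivative_truncExp p
    obtain ⟨b, hb⟩ := X_pow_dvd_pow_sub_C p (truncExp p)
    obtain ⟨c, hc⟩ := X_dvd_one_sub_truncExp (p := p)
    rw [constantCoeff_truncExp, map_one] at hb
    have hpow : truncExp p ^ (p - 1) * truncExp p = truncExp p ^ p := by
      rw [← pow_succ]
      congr 1
      omega
    have hXp : (X : (ZMod p)⟦X⟧) ^ p = X ^ (p - 1) * X := by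
      rw [← pow_succ]
      congr 1
      omega
    rw [hXp] at hb
    rw [hc, mul_pow]
    refine ⟨c ^ (p - 1) * derivative (ZMod p) (truncExp p) - truncExp p ^ (p - 1) * a - X * b, ?_⟩
    linear_combination -hb - truncExp p ^ (p - 1) * ha - hpow
  rw [X_pow_dvd_iff] at hd ⊢
  intro m hm
  obtain _ | m := m
  · simp
  · have h := hd m (by omega)
    rw [coeff_derivative] at h
    have h1 : ((m + 1 : ℕ) : ZMod p) ≠ 0 := natCast_ne_zero_of_pos_of_lt p (by omega) hm
    push_cast at h1
    exact (mul_eq_zero.1 h).resolve_right h1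

theorem X_pow_dvd_U_pow_sub_one : (X : (ZMod p)⟦X⟧) ^ p ∣ expSubst p D.U ^ p - 1 := by
  simpa [D.constantCoeff_U] using X_pow_dvd_pow_sub_C p (expSubst p D.U)

theorem X_pow_dvd_X_mul_derivative_Y :
    (X : (ZMod p)⟦X⟧) ^ (p - 1) ∣
      X * derivative (ZMod p) (expSubst p D.Y) - (1 - expSubst p D.U - X) := by
  have hp := (Fact.out : p.Prime).two_le
  set u := expSubst p D.U with hu
  have hXp : (X : (ZMod p)⟦X⟧) ^ p = X ^ (p - 1) * X := by
    rw [← pow_succ]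
    congr 1
    omega
  have hup : u ^ p = u ^ (p - 1) * u := by
    rw [← pow_succ]
    congr 1
    omega
  obtain ⟨a, ha⟩ := derivative_truncExp p
  obtain ⟨b, hb⟩ := D.X_pow_dvd_U_pow_sub_one
  obtain ⟨c, hc⟩ := D.X_pow_dvd_mul_U_add_X
  rw [← hu] at hb hc
  obtain ⟨w, hw⟩ : X ∣ u - 1 := by
    rw [X_dvd_iff]
    simp [hu, D.constantCoeff_U]
  have hdY : derivative (ZMod p) (expSubst p D.Y)
      = (u ^ (p - 1) - (u - 1) ^ (p - 1)) * derivative (ZMod p) u := by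
    rw [hu, derivative_expSubst, derivative_expSubst, D.derivative_Y]
    simp only [map_mul, map_sub, map_pow, map_one]
    ring
  have hdc : derivative (ZMod p) ((1 - truncExp p) * u + X) = X ^ (p - 1) * (X * derivative (ZMod p) c)
      := by
    rw [hc, Derivation.leibniz, derivative_pow, derivative_X, hXp]
    have : (p : (ZMod p)⟦X⟧) = 0 := by
      rw [← map_natCast (C (R := ZMod p)), CharP.cast_eq_zero, map_zero]
    simp only [this, smul_eq_mul]
    ring
  rw [map_add, derivative_X, Derivation.leibniz, map_sub, derivative_one] at hdc
  simp only [smul_eq_mul] at hdc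
  rw [hXp] at hb hc
  rw [hw, mul_pow] at hdY
  generalize derivative (ZMod p) (expSubst p D.Y) = y at *
  generalize derivative (ZMod p) u = u' at *
  generalize derivative (ZMod p) (truncExp p) = e' at *
  generalize derivative (ZMod p) c = c' at *
  generalize truncExp p = e at *
  generalize (X : (ZMod p)⟦X⟧) ^ (p - 1) = q at *
  rw [hup] at hb
  generalize u ^ (p - 1) = v at *
  generalize w ^ (p - 1) = w' at *
  refine ⟨X * c * y + (X * b - w' * u) * (e - 1) * u' + X * c - a * u - X * c', ?_⟩
  linear_combination (y + 1) * hc + (e - 1) * u * hdY + (e - 1) * u' * hb - hdc - u * ha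

theorem X_pow_dvd_Z_sub : (X : (ZMod p)⟦X⟧) ^ p ∣ expSubst p D.Z
    - (expSubst p D.Y + X * C (constantCoeff (expSubst p D.W))) := by
  obtain ⟨c, hc⟩ := D.X_pow_dvd_mul_U_add_X
  obtain ⟨d, hd⟩ := X_pow_dvd_pow_sub_C p (expSubst p D.W)
  simp only [Z, map_sub, map_mul, map_pow, map_one, expSubst_X]
  refine ⟨X * d - c * expSubst p D.W ^ p, ?_⟩
  linear_combination -(expSubst p D.W ^ p) * hc + X * hd

theorem coeff_Z_zero : coeff 0 (expSubst p D.Z) = 0 := by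
  rw [coeff_zero_eq_constantCoeff_apply, constantCoeff_expSubst]
  simp [Z, D.eval_Y]

theorem coeff_Y_mul (k : ℕ) (hk : k + 3 ≤ p) :
    coeff (k + 1) (expSubst p D.Y) * ((k : ZMod p) + 1)
      = -coeff (k + 1) (expSubst p D.U) - if k = 0 then 1 else 0 := by
  have h := X_pow_dvd_iff.1 D.X_pow_dvd_X_mul_derivative_Y (k + 1) (by omega)
  rw [map_sub, coeff_succ_X_mul, coeff_derivative, map_sub, map_sub, coeff_X, coeff_one] at h
  simp at h
  linear_combination h

theorem coeff_one_U_mul_two (hp : 3 ≤ p) : coeff 1 (expSubst p D.U) * 2 = -1 := by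
  have h := X_pow_dvd_iff.1 D.X_pow_dvd_mul_U_add_X 2 (by omega)
  have h0 : coeff 0 (expSubst p D.U) = 1 := by
    rw [coeff_zero_eq_constantCoeff_apply, D.constantCoeff_U]
  have h2 : (2 : ZMod p) ≠ 0 := by
    simpa using natCast_ne_zero_of_pos_of_lt p (k := 2) (by omega) (by omega)
  rw [map_add, coeff_mul, Finset.Nat.sum_antidiagonal_eq_sum_range_succ_mk] at h
  simp only [Finset.sum_range_succ, Finset.sum_range_zero, map_sub, coeff_one, coeff_truncExp,
    coeff_X] at h
  norm_num [h0, -coeff_zero_eq_constantCoeff] at h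
  field_simp at h
  linear_combination -h

theorem coeff_one_U : coeff 1 (expSubst p D.U) = -constantCoeff (expSubst p D.W) := by
  rw [D.U_eq, map_add, map_mul, map_sub, map_one, expSubst_X, map_add, coeff_mul,
    Finset.Nat.sum_antidiagonal_eq_sum_range_succ_mk]
  simp [Finset.sum_range_succ, coeff_one]

theorem coeff_Z_one (hp : 3 ≤ p) : coeff 1 (expSubst p D.Z) = 0 := by
  have h := X_pow_dvd_iff.1 D.X_pow_dvd_Z_sub 1 (by omega)
  rw [map_sub, map_add, coeff_succ_X_mul] at h
  have hY := D.coeff_Y_mul 0 (by omega)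
  have hU := D.coeff_one_U
  have h2 := D.coeff_one_U_mul_two hp
  simp at h hY
  linear_combination h + hY + hU - h2

theorem coeff_Z_mul {k : ℕ} (h2 : 2 ≤ k) (hk : k + 2 ≤ p) :
    coeff k (expSubst p D.Z) * (k : ZMod p) = -coeff k (expSubst p D.U) := by
  obtain ⟨k, rfl⟩ : ∃ j, k = j + 1 := ⟨k - 1, by omega⟩
  have h := X_pow_dvd_iff.1 D.X_pow_dvd_Z_sub (k + 1) (by omega)
  have hk0 : k ≠ 0 := by omega
  rw [map_sub, map_add, coeff_succ_X_mul, coeff_C] at h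
  have hY := D.coeff_Y_mul k (by omega)
  simp [hk0] at h hY
  push_cast
  linear_combination ((k : ZMod p) + 1) * h + hY

theorem coeff_truncExp_pow_mul (c q : ℕ) {a s e : ℕ} (has : a + s = p - 1)
    (he : e + p = a + (p * q + 1)) (f : (ZMod p)⟦X⟧) :
    coeff (p - 1) (truncExp p ^ c * ((1 - truncExp p) ^ a * expSubst p D.U ^ e * f))
      = (-1) ^ a * coeff s (truncExp p ^ c * expSubst p D.U * f) := by
  have hp := (Fact.out : p.Prime).two_le
  set u := expSubst p D.U with hu
  have hdvd : (X : (ZMod p)⟦X⟧) ^ p ∣ (1 - truncExp p) ^ a * u ^ e - (-X) ^ a * u := by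
    set I := Ideal.span {(X : (ZMod p)⟦X⟧) ^ p}
    have h1 : Ideal.Quotient.mk I (1 - truncExp p) * Ideal.Quotient.mk I u
        = Ideal.Quotient.mk I (-X) := by
      rw [← map_mul, Ideal.Quotient.eq, Ideal.mem_span_singleton, sub_neg_eq_add]
      exact D.X_pow_dvd_mul_U_add_X
    have h2 : Ideal.Quotient.mk I u ^ p = 1 := by
      rw [← map_pow, ← map_one (Ideal.Quotient.mk I), Ideal.Quotient.eq,
        Ideal.mem_span_singleton]
      exact D.X_pow_dvd_U_pow_sub_one
    rw [← Ideal.mem_span_singleton, ← Ideal.Quotient.eq]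
    simp only [map_mul, map_pow]
    rw [← h1]
    calc _ = Ideal.Quotient.mk I (1 - truncExp p) ^ a * Ideal.Quotient.mk I u ^ (e + p) := by
          rw [pow_add, h2, mul_one]
      _ = _ := by
          rw [he, pow_add, pow_add, pow_mul, h2, one_pow, mul_pow]
          ring
  obtain ⟨w, hw⟩ := hdvd
  have e1 : truncExp p ^ c * ((1 - truncExp p) ^ a * u ^ e * f)
      = X ^ p * (truncExp p ^ c * f * w) +
        X ^ a * (C ((-1) ^ a) * (truncExp p ^ c * u * f)) := by
    have : (-X : (ZMod p)⟦X⟧) ^ a = X ^ a * C ((-1) ^ a) := by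
      rw [neg_pow, map_pow, map_neg, map_one, mul_comm]
    rw [this] at hw
    linear_combination truncExp p ^ c * f * hw
  have e2 : p - 1 = s + a := by omega
  rw [e1, map_add, coeff_X_pow_mul', if_neg (by omega), zero_add, e2, coeff_X_pow_mul,
    coeff_C_mul]

/-- The coefficient governing the Fleck quotients is the reduction of the divided Bernoulli sum. -/
theorem isReduction_sum_bernoulli (hp : 3 ≤ p) {t : ℚ} {c s : ℕ} (ht : IsReduction p t c)
    (hs : s + 2 ≤ p) :
    IsReduction p (1 / (s.factorial : ℚ) * ∑ k ∈ Icc 2 s, (s.choose k : ℚ) * bernoulli k / k *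
        (Polynomial.bernoulli (s - k)).eval t)
      (-coeff s (truncExp p ^ c * expSubst p D.U * expSubst p D.Z)) := by
  have hP : -coeff s (truncExp p ^ c * expSubst p D.U * expSubst p D.Z)
      = ∑ k ∈ Icc 2 s, coeff (s - k) (truncExp p ^ c * expSubst p D.U)
        * (coeff k (truncExp p ^ 0 * expSubst p D.U) * (k : ZMod p)⁻¹) := by
    rw [mul_comm, coeff_mul, Finset.Nat.sum_antidiagonal_eq_sum_range_succ_mk,
      ← Finset.sum_subset (s₁ := Icc 2 s), ← Finset.sum_neg_distrib]
    · refine Finset.sum_congr rfl fun k hk => ?_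
      rw [Finset.mem_Icc] at hk
      have h1 := D.coeff_Z_mul hk.1 (by omega)
      have h2 := natCast_ne_zero_of_pos_of_lt p (k := k) (by omega) (by omega)
      rw [pow_zero, one_mul]
      field_simp
      linear_combination -coeff (s - k) (truncExp p ^ c * expSubst p D.U) * h1
    · intro k hk
      simp only [Finset.mem_Icc, Finset.mem_range] at hk ⊢
      omega
    · intro k hk hk'
      simp only [Finset.mem_Icc, Finset.mem_range] at hk hk'
      have : k = 0 ∨ k = 1 := by omega
      rcases this with rfl | rfl
      · rw [D.coeff_Z_zero, zero_mul]
      · rw [D.coeff_Z_one hp, zero_mul]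
  rw [hP, Finset.mul_sum]
  refine IsReduction.sum _ _ _ fun k hk => ?_
  rw [Finset.mem_Icc] at hk
  have hB := isReduction_bernoulli_div_factorial D.X_pow_dvd_mul_U_add_X ht
    (j := s - k) (by omega)
  have hb := isReduction_bernoulli_div_factorial D.X_pow_dvd_mul_U_add_X
    (t := 0) (c := 0) (by simpa using IsReduction.natCast (p := p) 0) (j := k) (by omega)
  have hk' := IsReduction.inv_natCast
    (natCast_ne_zero_of_pos_of_lt p (k := k) (by omega) (by omega))
  convert! hB.mul (hb.mul hk') using 1
  rw [Polynomial.bernoulli_eval_zero, Nat.cast_choose ℚ hk.2]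
  have : (s.factorial : ℚ) ≠ 0 := by positivity
  field_simp

end FleckData

section ResidueSum

open Polynomial

/-- The sum of the coefficients of a polynomial whose index is congruent to `r` modulo `p`. -/
noncomputable def residueSum (p : ℕ) (r : ℤ) : ℤ[X] →ₗ[ℤ] ℤ :=
  Polynomial.lsum fun k => if ((k : ℤ) - r) % p = 0 then LinearMap.id else 0

theorem residueSum_C_mul_X_pow (p : ℕ) (r a : ℤ) (k : ℕ) :
    residueSum p r (C a * X ^ k) = if ((k : ℤ) - r) % p = 0 then a else 0 := by
  rw [C_mul_X_pow_eq_monomial, residueSum, Polynomial.lsum_apply,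
    Polynomial.sum_monomial_index _ _ (by simp)]
  split_ifs <;> simp

theorem residueSum_X_pow_sub_one_mul (p : ℕ) (r : ℤ) (f : ℤ[X]) :
    residueSum p r ((X ^ p - 1) * f) = 0 := by
  induction f using Polynomial.induction_on' with
  | add f g hf hg => rw [mul_add, map_add, hf, hg, add_zero]
  | monomial k a =>
    have e : (X ^ p - 1) * monomial k a = C a * X ^ (k + p) - C a * X ^ k := by
      rw [← C_mul_X_pow_eq_monomial]
      ring
    have hmod : (((k + p : ℕ) : ℤ) - r) % p = ((k : ℤ) - r) % p := by
      have : (((k + p : ℕ) : ℤ) - r) = (k - r) + p := by push_cast; ring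
      rw [this, Int.add_emod_right]
    rw [e, map_sub, residueSum_C_mul_X_pow, residueSum_C_mul_X_pow, hmod, sub_self]

theorem residueSum_eq_of_dvd_sub {p : ℕ} {r : ℤ} {f g : ℤ[X]} (h : X ^ p - 1 ∣ f - g) :
    residueSum p r f = residueSum p r g := by
  obtain ⟨w, hw⟩ := h
  rw [← sub_eq_zero, ← map_sub, hw, residueSum_X_pow_sub_one_mul]

theorem Cp_eq_residueSum (p n : ℕ) (r : ℤ) : Cp p n r = residueSum p r ((1 - X) ^ n) := by
  have e : (1 - X : ℤ[X]) ^ n = ∑ k ∈ range (n + 1), C ((-1) ^ k * (n.choose k : ℤ)) * X ^ k := by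
    rw [sub_eq_neg_add, add_pow]
    refine Finset.sum_congr rfl fun k _ => ?_
    rw [neg_pow, one_pow, mul_one]
    simp
    ring
  rw [e, map_sum, Cp, Int.cast_sum]
  refine Finset.sum_congr rfl fun k _ => ?_
  rw [residueSum_C_mul_X_pow]
  split_ifs <;> simp

theorem residueSum_cast (p : ℕ) [Fact p.Prime] (r : ℤ) (c : ℕ) (hc : (c : ZMod p) = -r)
    (f : ℤ[X]) :
    (residueSum p r f : ZMod p) = (f.eval 1 : ℤ)
      + PowerSeries.coeff (p - 1) (truncExp p ^ c * expSubst p f) := by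
  have hp := (Fact.out : p.Prime).two_le
  induction f using Polynomial.induction_on' with
  | add f g hf hg =>
    rw [map_add, map_add, mul_add, map_add, eval_add]
    push_cast
    rw [hf, hg]
    ring
  | monomial k a =>
    have hE : truncExp p ^ c * expSubst p (C a * X ^ k)
        = PowerSeries.C (a : ZMod p) * truncExp p ^ (k + c) := by
      rw [map_mul, map_pow, expSubst_X, pow_add]
      have : expSubst p (C a) = PowerSeries.C (a : ZMod p) := by simp
      rw [this]
      ring
    have hiff : ((k : ℤ) - r) % p = 0 ↔ ((k + c : ℕ) : ZMod p) = 0 := by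
      rw [← Int.dvd_iff_emod_eq_zero, ← ZMod.intCast_zmod_eq_zero_iff_dvd]
      push_cast
      rw [hc, sub_eq_add_neg]
    rw [← C_mul_X_pow_eq_monomial, residueSum_C_mul_X_pow, hE, PowerSeries.coeff_C_mul,
      coeff_truncExp_pow p _ (by omega), ZMod.wilsons_lemma]
    by_cases h : ((k + c : ℕ) : ZMod p) = 0
    · rw [if_pos (hiff.2 h), h, zero_pow (by omega)]
      simp
    · rw [if_neg (mt hiff.1 h), ZMod.pow_card_sub_one_eq_one h]
      simp [inv_neg]

end ResidueSum

section Binomial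

variable {R : Type*} [CommRing R]

theorem exists_one_add_pow_eq (x : R) (n : ℕ) :
    ∃ k, (1 + x) ^ n = 1 + n * x + (n.choose 2 : R) * x ^ 2 + x ^ 3 * k := by
  induction n with
  | zero => exact ⟨0, by simp⟩
  | succ n ih =>
    obtain ⟨k, hk⟩ := ih
    refine ⟨(n.choose 2 : R) + k * (1 + x), ?_⟩
    rw [pow_succ, hk, Nat.choose_succ_succ' n 1, Nat.choose_one_right]
    push_cast
    ring

theorem exists_one_add_mul_pow_prime_pow {p : ℕ} (hodd : Odd p) (Y : R) (v : ℕ) :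
    ∃ Z, (1 + p * Y) ^ p ^ v = 1 + (p : R) ^ (v + 1) * (Y + p * Z) := by
  induction v with
  | zero => exact ⟨0, by simp⟩
  | succ v ih =>
    obtain ⟨Z, hZ⟩ := ih
    obtain ⟨j, hj⟩ := hodd
    obtain ⟨k, hk⟩ := exists_one_add_pow_eq ((p : R) ^ (v + 1) * (Y + p * Z)) p
    have hch : p.choose 2 = p * j := by
      rw [Nat.choose_two_right, hj, Nat.add_sub_cancel]
      rw [show (2 * j + 1) * (2 * j) = (2 * j + 1) * j * 2 by ring, Nat.mul_div_cancel _ (by simp)]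
    refine ⟨Z + (p : R) ^ v * j * (Y + p * Z) ^ 2 + (p : R) ^ (2 * v) * (Y + p * Z) ^ 3 * k, ?_⟩
    rw [pow_succ p v, pow_mul, hZ, hk, hch]
    push_cast
    ring

theorem exists_one_add_mul_pow {p : ℕ} (hodd : Odd p) (Y : R) (v b : ℕ) :
    ∃ Z, (1 + p * Y) ^ (p ^ v * b) = 1 + (p : R) ^ (v + 1) * (b * Y + p * Z) := by
  obtain ⟨Z, hZ⟩ := exists_one_add_mul_pow_prime_pow hodd Y v
  obtain ⟨k, hk⟩ := exists_one_add_pow_eq ((p : R) ^ (v + 1) * (Y + p * Z)) b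
  refine ⟨b * Z + (p : R) ^ v * (b.choose 2) * (Y + p * Z) ^ 2
    + (p : R) ^ (2 * v + 1) * (Y + p * Z) ^ 3 * k, ?_⟩
  rw [pow_mul, hZ, hk]
  ring

end Binomial

theorem nUp_spec {p : ℕ} (hp : p.Prime) (n : ℕ) :
    nUp p n + 2 ≤ p ∧ ∃ q, n + nUp p n = q * (p - 1) := by
  have h2 := hp.two_le
  have hpos : (0 : ℤ) < (p : ℤ) - 1 := by omega
  have h0 := Int.emod_nonneg (-(n : ℤ)) hpos.ne'
  have h1 := Int.emod_lt_of_pos (-(n : ℤ)) hpos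
  have hcast : ((nUp p n : ℕ) : ℤ) = (-(n : ℤ)) % ((p : ℤ) - 1) := Int.toNat_of_nonneg h0
  refine ⟨by omega, ?_⟩
  have hdvd : ((p - 1 : ℕ) : ℤ) ∣ ((n + nUp p n : ℕ) : ℤ) := by
    push_cast [Nat.cast_sub hp.one_le]
    rw [hcast, Int.emod_def]
    exact ⟨-(-(n : ℤ) / ((p : ℤ) - 1)), by ring⟩
  obtain ⟨q, hq⟩ := Int.natCast_dvd_natCast.1 hdvd
  exact ⟨q, by rw [hq, mul_comm]⟩

theorem nUp_congr {p m n : ℕ} (h : (m : ℤ) ≡ n [ZMOD ((p : ℤ) - 1)]) : nUp p m = nUp p n := by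
  rw [nUp, nUp, h.neg]

theorem Fp_eq_of_add_eq {p a e : ℕ} (hp : p.Prime) (r : ℤ) (ha : 0 < a) (hap : a < p) :
    Fp p (e * (p - 1) + a) r = (-(p : ℚ)) ^ (-(e : ℤ)) * Cp p (e * (p - 1) + a) r := by
  have h2 := hp.two_le
  have hpos : (0 : ℤ) < (p : ℤ) - 1 := by omega
  have hdiv : Int.fdiv (((e * (p - 1) + a : ℕ) : ℤ) - 1) ((p : ℤ) - 1) = e := by
    rw [Int.fdiv_eq_ediv_of_nonneg _ hpos.le]
    push_cast [Nat.cast_sub hp.one_le]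
    rw [show (e : ℤ) * (p - 1) + a - 1 = (a - 1) + e * (p - 1) by ring,
      Int.add_mul_ediv_right _ _ hpos.ne', Int.ediv_eq_zero_of_lt (by omega) (by omega), zero_add]
  rw [Fp, hdiv, if_neg (by omega), add_zero]

theorem Fp_two (n : ℕ) (r : ℤ) : Fp 2 (2 * n + 2 - 1) r = residueSum 2 r (1 - Polynomial.X) := by
  open Polynomial in
  have e : 2 * n + 2 - 1 = 2 * n * (2 - 1) + 1 := by omega
  have hdvd (k : ℕ) : (X ^ 2 - 1 : ℤ[X]) ∣ (1 - X) ^ (k + 1) - C (2 ^ k : ℤ) * (1 - X) := by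
    induction k with
    | zero => simp
    | succ k ih =>
      obtain ⟨w, hw⟩ := ih
      refine ⟨w * (1 - X) + C (2 ^ k), ?_⟩
      rw [pow_succ (2 : ℤ), C_mul, pow_succ (1 - X : ℤ[X]) (k + 1), sub_eq_iff_eq_add.1 hw]
      simp only [map_ofNat]
      ring
  have h := residueSum_eq_of_dvd_sub (r := r) (hdvd (2 * n))
  rw [← smul_eq_C_mul, map_smul] at h
  rw [e, Fp_eq_of_add_eq Nat.prime_two r (by norm_num) (by norm_num), Cp_eq_residueSum]
  simp only [Nat.add_one_sub_one, mul_one]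
  rw [h, zpow_neg, zpow_natCast, smul_eq_mul]
  push_cast
  rw [Even.neg_pow (by simp)]
  field_simp

namespace FleckData

open Polynomial

variable {p : ℕ} (D : FleckData p)

theorem X_pow_sub_one_dvd_one_sub_X_pow_sub (a e : ℕ) :
    (X ^ p - 1 : ℤ[X]) ∣ (1 - X) ^ (e * (p - 1) + (a + 1))
      - C ((-(p : ℤ)) ^ e) * ((1 - X) ^ (a + 1) * D.U ^ e) := by
  rcases Nat.eq_zero_or_pos p with rfl | hp
  · have h := D.X_pow
    simp at h
  induction e with
  | zero => simp
  | succ e ih =>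
    obtain ⟨w, hw⟩ := ih
    have hpow : (1 - X : ℤ[X]) ^ ((e + 1) * (p - 1) + (a + 1))
        = (1 - X) ^ (p - 1) * (1 - X) ^ (e * (p - 1) + (a + 1)) := by
      rw [← pow_add]
      congr 1
      ring
    have hp1 : (1 - X : ℤ[X]) ^ p = (1 - X) ^ (p - 1) * (1 - X) := by
      rw [← pow_succ, Nat.sub_add_cancel hp]
    have hX := D.X_pow
    rw [hp1] at hX
    refine ⟨(1 - X) ^ (p - 1) * w - C ((-(p : ℤ)) ^ e) * (1 - X) ^ a * D.U ^ e, ?_⟩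
    rw [hpow, sub_eq_iff_eq_add.1 hw, pow_succ (-(p : ℤ)), C_mul, C_neg, map_natCast]
    linear_combination (C ((-(p : ℤ)) ^ e) * (1 - X) ^ a * D.U ^ e) * hX

theorem Fp_eq_residueSum {a e : ℕ} (hp : p.Prime) (r : ℤ) (ha : 0 < a) (hap : a < p) :
    Fp p (e * (p - 1) + a) r = residueSum p r ((1 - X) ^ a * D.U ^ e) := by
  obtain ⟨a, rfl⟩ := Nat.exists_eq_succ_of_ne_zero ha.ne'
  have h := residueSum_eq_of_dvd_sub (r := r) (D.X_pow_sub_one_dvd_one_sub_X_pow_sub a e)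
  rw [← smul_eq_C_mul, map_smul] at h
  have hp0 : (p : ℚ) ≠ 0 := Nat.cast_ne_zero.2 hp.ne_zero
  rw [Fp_eq_of_add_eq hp r ha hap, Cp_eq_residueSum, h, zpow_neg, zpow_natCast, smul_eq_mul]
  push_cast
  rw [inv_mul_cancel_left₀ (pow_ne_zero _ (neg_ne_zero.2 hp0))]

theorem X_pow_sub_one_dvd_U_pow_sub (t : ℕ) :
    (X ^ p - 1 : ℤ[X]) ∣ D.U ^ (p * t) - (1 + p * D.Z) ^ t := by
  rw [pow_mul]
  refine dvd_trans ⟨-D.W ^ p, ?_⟩ (sub_dvd_pow_sub_pow _ _ t)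
  rw [D.U_pow, D.X_pow, Z, mul_pow]
  ring

/-- First order expansion of the Fleck quotients along `e ↦ e + p t`. -/
theorem exists_Fp_sub_eq {a e : ℕ} (hp : p.Prime) (hodd : Odd p) (r : ℤ) (ha : 0 < a)
    (hap : a < p) (v b : ℕ) :
    ∃ l : ℤ, Fp p ((e + p * (p ^ v * b)) * (p - 1) + a) r - Fp p (e * (p - 1) + a) r
      = (p : ℚ) ^ (v + 1)
        * (b * residueSum p r ((1 - X) ^ a * D.U ^ e * D.Z) + p * l) := by
  obtain ⟨V, hV⟩ := exists_one_add_mul_pow hodd D.Z v b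
  refine ⟨residueSum p r ((1 - X) ^ a * D.U ^ e * V), ?_⟩
  have h : residueSum p r ((1 - X) ^ a * D.U ^ (e + p * (p ^ v * b)))
      = residueSum p r ((1 - X) ^ a * D.U ^ e
        + (((p : ℤ) ^ (v + 1) * b) • ((1 - X) ^ a * D.U ^ e * D.Z)
          + ((p : ℤ) ^ (v + 1) * p) • ((1 - X) ^ a * D.U ^ e * V))) := by
    refine residueSum_eq_of_dvd_sub ?_
    obtain ⟨w, hw⟩ := D.X_pow_sub_one_dvd_U_pow_sub (p ^ v * b)
    refine ⟨(1 - X) ^ a * D.U ^ e * w, ?_⟩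
    rw [pow_add D.U, sub_eq_iff_eq_add.1 hw, hV, zsmul_eq_mul, zsmul_eq_mul]
    push_cast
    ring
  rw [D.Fp_eq_residueSum hp r ha hap, D.Fp_eq_residueSum hp r ha hap, h, map_add, map_add,
    map_smul, map_smul, smul_eq_mul, smul_eq_mul]
  push_cast
  ring

theorem residueSum_cast_eq [Fact p.Prime] (r : ℤ) {c a s e q : ℕ} (hc : (c : ZMod p) = -r)
    (ha : 0 < a) (has : a + s = p - 1) (he : e + p = a + (p * q + 1)) :
    (residueSum p r ((1 - X) ^ a * D.U ^ e * D.Z) : ZMod p)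
      = (-1) ^ a * PowerSeries.coeff s (truncExp p ^ c * expSubst p D.U * expSubst p D.Z) := by
  rw [residueSum_cast p r c hc, ← D.coeff_truncExp_pow_mul c q has he]
  simp [ha.ne']

end FleckData

theorem modCong_Fp_sub_div {p : ℕ} (hp : p.Prime) (hodd : Odd p) (r : ℤ) (n t : ℕ) (ht : t ≠ 0) :
    modCong p 1
      ((Fp p (p * (n + (p - 1) * t) + p - 1) r - Fp p (p * n + p - 1) r)
        / ((p : ℚ) * (((n + (p - 1) * t : ℕ) : ℚ) - (n : ℚ))))
      ((-1 : ℚ) ^ nUp p n / ((nUp p n).factorial : ℚ) *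
        (∑ k ∈ Icc 1 (nUp p n - 1),
            ((Polynomial.bernoulli k).eval (-(r : ℚ)) / (k : ℚ)) *
              (Polynomial.bernoulli (nUp p n - k)).eval (-(r : ℚ))
          - harm (nUp p n - 1) * (Polynomial.bernoulli (nUp p n)).eval (-(r : ℚ)))) := by
  have : Fact p.Prime := ⟨hp⟩
  have hp3 : 3 ≤ p := by
    obtain ⟨j, hj⟩ := hodd
    have := hp.two_le
    omega
  obtain ⟨D⟩ := exists_fleckData hp hodd
  obtain ⟨hs, q, hq⟩ := nUp_spec hp n
  set s := nUp p n
  obtain ⟨v, b, hb, rfl⟩ := Nat.exists_eq_pow_mul_and_not_dvd ht p hp.ne_one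
  obtain ⟨a, ha, has⟩ : ∃ a, 0 < a ∧ a + s = p - 1 := ⟨p - 1 - s, by omega, by omega⟩
  obtain ⟨d, rfl⟩ : ∃ d, p = d + 1 := ⟨p - 1, by omega⟩
  rw [Nat.add_sub_cancel] at has hq
  have hd : Even d := by
    obtain ⟨j, hj⟩ := hodd
    exact ⟨j, by omega⟩
  have hn : (d + 1) * n + (d + 1) - 1 = (n + q) * (d + 1 - 1) + a := by
    rw [Nat.add_sub_cancel, ← add_assoc, Nat.add_sub_cancel]
    linarith
  have hm : (d + 1) * (n + (d + 1 - 1) * ((d + 1) ^ v * b)) + (d + 1) - 1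
      = (n + q + (d + 1) * ((d + 1) ^ v * b)) * (d + 1 - 1) + a := by
    rw [Nat.add_sub_cancel, ← add_assoc, Nat.add_sub_cancel]
    linarith
  have he : n + q + (d + 1) = a + ((d + 1) * q + 1) := by linarith
  obtain ⟨l, hl⟩ := D.exists_Fp_sub_eq (e := n + q) hp hodd r ha (by omega) v b
  have hc : (((-(r : ZMod (d + 1))).val : ℕ) : ZMod (d + 1)) = -r := ZMod.natCast_zmod_val _
  have hρ := D.residueSum_cast_eq r hc ha (by simpa using has) he
  set ρ := residueSum (d + 1) r ((1 - Polynomial.X) ^ a * D.U ^ (n + q) * D.Z)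
  set κ := PowerSeries.coeff s (truncExp (d + 1) ^ (-(r : ZMod (d + 1))).val
    * expSubst (d + 1) D.U * expSubst (d + 1) D.Z)
  have hsign : (-1 : ZMod (d + 1)) ^ a = (-1) ^ s := by
    have : (-1 : ZMod (d + 1)) ^ a * (-1) ^ s = 1 := by rw [← pow_add, has, hd.neg_one_pow]
    rcases neg_one_pow_eq_or (ZMod (d + 1)) s with h | h <;> rw [h] at this ⊢
    · simpa using this
    · linear_combination -this
  have hp0 : ((d + 1 : ℕ) : ZMod (d + 1)) = 0 := ZMod.natCast_self _
  have hdq : (d : ℚ) ≠ 0 := by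
    have : d ≠ 0 := by omega
    exact_mod_cast this
  have hbq : (b : ℚ) ≠ 0 := by
    have : b ≠ 0 := by rintro rfl; simp at hb
    exact_mod_cast this
  have hbz : (b : ZMod (d + 1)) ≠ 0 := by rwa [Ne, ZMod.natCast_eq_zero_iff]
  have hdz : (d : ZMod (d + 1)) = -1 := by
    push_cast at hp0
    linear_combination hp0
  rw [hn, hm, hl, Polynomial.miki_gessel]
  have hleft : (((d + 1 : ℕ) : ℚ) ^ (v + 1) * (b * (ρ : ℚ) + ((d + 1 : ℕ) : ℚ) * l))
      / (((d + 1 : ℕ) : ℚ) * (((n + (d + 1 - 1) * ((d + 1) ^ v * b) : ℕ) : ℚ) - (n : ℚ)))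
      = ((b * ρ + (d + 1) * l : ℤ) : ℚ) / ((d * b : ℤ) : ℚ) := by
    rw [Nat.add_sub_cancel]
    push_cast
    have : (d : ℚ) + 1 ≠ 0 := by positivity
    field_simp
    ring
  have hL : IsReduction (d + 1) (((b * ρ + (d + 1) * l : ℤ) : ℚ) / ((d * b : ℤ) : ℚ)) (-ρ) := by
    refine ⟨b * ρ + (d + 1) * l, d * b, ?_, ?_, ?_⟩
    · push_cast
      rw [hdz]
      simpa using hbz
    · rw [div_mul_cancel₀]
      push_cast
      exact mul_ne_zero hdq hbq
    · push_cast
      rw [hdz]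
      ring
  rw [hleft]
  refine hL.modCong ?_
  have ht : IsReduction (d + 1) (-(r : ℚ)) (((-(r : ZMod (d + 1))).val : ℕ) : ZMod (d + 1)) := by
    rw [hc]
    exact (IsReduction.intCast r).neg
  have hR := ((IsReduction.intCast (p := d + 1) (-1)).pow s).mul
    (D.isReduction_sum_bernoulli hp3 ht hs)
  convert hR using 1
  · push_cast
    ring
  · rw [hρ, hsign]
    push_cast
    ring

theorem stmt4 (p : ℕ) (hp : p.Prime) (r : ℤ) (m n : ℕ) (hmn : m ≠ n)
    (h : (m:ℤ) ≡ (n:ℤ) [ZMOD ((p:ℤ) - 1)]) :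
    modCong p 1 ((Fp p (p*m+p-1) r - Fp p (p*n+p-1) r) / ((p:ℚ) * ((m:ℚ) - (n:ℚ))))
      ((-1:ℚ)^(nUp p n) / ((nUp p n).factorial : ℚ) *
        (∑ k ∈ Finset.Icc 1 (nUp p n - 1),
            ((Polynomial.bernoulli k).eval (-(r:ℚ)) / (k:ℚ)) *
              (Polynomial.bernoulli (nUp p n - k)).eval (-(r:ℚ))
          - harm (nUp p n - 1) * (Polynomial.bernoulli (nUp p n)).eval (-(r:ℚ)))) := by
  rcases hp.eq_two_or_odd' with rfl | hodd
  · left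
    have hn : nUp 2 n = 0 := by
      have := (nUp_spec Nat.prime_two n).1
      omega
    rw [hn, Fp_two, Fp_two, sub_self, zero_div]
    simp [harm]
  wlog hlt : n < m generalizing m n
  · have := this n m hmn.symm h.symm (by omega)
    rw [nUp_congr h, ← neg_sub (Fp p (p * m + p - 1) r), ← neg_sub (m : ℚ), mul_neg,
      neg_div_neg_eq] at this
    exact this
  obtain ⟨t, ht⟩ := (Nat.modEq_iff_dvd' hlt.le).1 ((Int.natCast_modEq_iff).1
    (by rw [Nat.cast_sub hp.one_le]; exact_mod_cast h.symm))
  obtain rfl : m = n + (p - 1) * t := by omega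
  exact modCong_Fp_sub_div hp hodd r n t (by rintro rfl; simp at hmn)
end

section
/- Let p be an odd prime and let n be a positive integer not divisible by p−1. Then F_p(n,0)/n is a p-adic integer; that is, the p-adic valuation of F_p(n,0) is at least the p-adic valuation of n. -/
open Finset

section RootOfUnity

variable {A : Type*} [CommRing A] {p : ℕ}

/-- If `T ^ p = 1`, then `(1 - T) ^ p` is a multiple of `p * (1 - T)`. -/
lemma exists_one_sub_pow_prime_eq (hp : p.Prime) (hodd : Odd p) {T : A} (hT : T ^ p = 1) :
    ∃ h : A, (1 - T) ^ p = p * (1 - T) * h := by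
  obtain ⟨r, hr⟩ := exists_add_pow_prime_eq hp (1 : A) (-(1 - T))
  rw [hodd.neg_pow, show (1 : A) + -(1 - T) = T by ring, hT, one_pow] at hr
  exact ⟨-r, by linear_combination hr⟩

/-- If `x ^ p ∈ p x A`, then `x ^ (m + 1) ∈ p ^ ⌊m / (p - 1)⌋ A`. -/
lemma natCast_pow_dvd_pow_succ (hp : p.Prime) {x h : A} (hx : x ^ p = p * x * h) (m : ℕ) :
    (p : A) ^ (m / (p - 1)) ∣ x ^ (m + 1) := by
  have key : ∀ k : ℕ, x ^ (k * (p - 1) + 1) = (p : A) ^ k * x * h ^ k := by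
    intro k
    induction k with
    | zero => simp
    | succ k ih =>
      have e : (k + 1) * (p - 1) + 1 = (k * (p - 1) + 1) + (p - 1) := by ring
      have e' : x * x ^ (p - 1) = x ^ p := mul_pow_sub_one hp.ne_zero x
      rw [e, pow_add, ih]
      linear_combination (p : A) ^ k * h ^ k * (e' + hx)
  have hm : m + 1 = (m / (p - 1) * (p - 1) + 1) + m % (p - 1) := by
    have := Nat.div_add_mod' m (p - 1)
    omega
  generalize m / (p - 1) = k at *
  rw [hm, pow_add, key, mul_assoc, mul_assoc]
  exact dvd_mul_right _ _

/-- If `x ^ p ∈ p x A`, then `p ^ a ∣ m` forces `(1 + x y) ^ m ≡ 1` modulo `p ^ a`. -/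
lemma natCast_pow_dvd_one_add_mul_pow_sub_one (hp : p.Prime) {x h : A} (hx : x ^ p = p * x * h)
    (y : A) {a m : ℕ} (ha : p ^ a ∣ m) :
    (p : A) ^ a ∣ (1 + x * y) ^ m - 1 := by
  have key : ∀ a : ℕ, ∃ z : A, (1 + x * y) ^ (p ^ a) = 1 + (p : A) ^ a * x * z := by
    intro a
    induction a with
    | zero => exact ⟨y, by simp⟩
    | succ a ih =>
      obtain ⟨z, hz⟩ := ih
      obtain ⟨r, hr⟩ := exists_add_pow_prime_eq hp (1 : A) ((p : A) ^ a * x * z)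
      rw [pow_succ, pow_mul, hz, hr, mul_pow, mul_pow, hx,
        ← mul_pow_sub_one hp.ne_zero ((p : A) ^ a)]
      exact ⟨((p : A) ^ a) ^ (p - 1) * h * z ^ p + z * r, by ring⟩
  obtain ⟨k, rfl⟩ := ha
  obtain ⟨z, hz⟩ := key a
  have h1 := sub_dvd_pow_sub_pow ((1 + x * y) ^ (p ^ a)) 1 k
  rw [one_pow, ← pow_mul] at h1
  refine dvd_trans ⟨x * z, ?_⟩ h1
  rw [hz]
  ring

/-- The Gauss sum `∑ v ^ i T ^ (b ^ i)` attached to a `p`-th root of unity `T` is of the form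
`(1 - T) (1 + (1 - T) β)` as soon as `∑ v ^ i = 0` and `v b ≡ 1` modulo `p`. -/
lemma exists_sum_pow_mul_pow_eq (hp : p.Prime) {T : A} (hT : T ^ p = 1) {v b : ℕ}
    (hvb : v * b ≡ 1 [MOD p]) (hv : ∑ i ∈ range (p - 1), (v : A) ^ i = 0) :
    ∃ β : A, ∑ i ∈ range (p - 1), (v : A) ^ i * T ^ (b ^ i) = (1 - T) * (1 + (1 - T) * β) := by
  have geom : ∀ m : ℕ, ∃ s : A, T ^ m - 1 = -(1 - T) * (m - (1 - T) * s) := by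
    intro m
    induction m with
    | zero => exact ⟨0, by simp⟩
    | succ m ih =>
      obtain ⟨s, hs⟩ := ih
      refine ⟨s + m - (1 - T) * s, ?_⟩
      push_cast
      linear_combination T * hs
  choose s hs using geom
  have hpT : (p : A) * (1 - T) = (1 - T) * (1 - T) * s p := by
    have := hs p
    rw [hT] at this
    linear_combination this
  obtain ⟨α, hα⟩ : (p : ℤ) ∣ ∑ i ∈ range (p - 1), ((v : ℤ) * b) ^ i + 1 := by
    rw [← ZMod.intCast_zmod_eq_zero_iff_dvd _ p]
    have : (v : ZMod p) * b = 1 := by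
      have := (ZMod.natCast_eq_natCast_iff _ _ _).2 hvb
      simpa using this
    push_cast
    rw [this]
    simp [Nat.cast_sub hp.one_le]
  have hα' : ∑ i ∈ range (p - 1), (v : A) ^ i * (b : A) ^ i = p * α - 1 := by
    have := congrArg (Int.cast : ℤ → A) hα
    push_cast at this
    simp only [← mul_pow]
    linear_combination this
  refine ⟨-(s p * α) + ∑ i ∈ range (p - 1), (v : A) ^ i * s (b ^ i), ?_⟩
  have expand : ∑ i ∈ range (p - 1), (v : A) ^ i * T ^ (b ^ i)
      = ∑ i ∈ range (p - 1), (v : A) ^ i - (1 - T) * ∑ i ∈ range (p - 1), (v : A) ^ i * (b : A) ^ i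
        + (1 - T) * (1 - T) * ∑ i ∈ range (p - 1), (v : A) ^ i * s (b ^ i) := by
    rw [mul_sum, mul_sum, ← sum_sub_distrib, ← sum_add_distrib]
    refine sum_congr rfl fun i _ => ?_
    have := hs (b ^ i)
    push_cast at this
    linear_combination (v : A) ^ i * this
  rw [expand, hv, hα']
  linear_combination (-(α : A)) * hpT

end RootOfUnity

/-- A natural number whose class generates `(ZMod p)ˣ`. -/
lemma exists_nat_primitive_root {p : ℕ} (hp : p.Prime) :
    ∃ c : ℕ, c.Coprime p ∧ ∀ n : ℕ, c ^ n ≡ 1 [MOD p] → p - 1 ∣ n := by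
  have := Fact.mk hp
  obtain ⟨g, hg⟩ := IsCyclic.exists_generator (α := (ZMod p)ˣ)
  refine ⟨(g : ZMod p).val, ZMod.val_coe_unit_coprime g, fun n hn => ?_⟩
  have ho : orderOf g = p - 1 := by
    rw [orderOf_eq_card_of_forall_mem_zpowers hg, Nat.card_eq_fintype_card, ZMod.card_units]
  rw [← ho, orderOf_dvd_iff_pow_eq_one]
  have := (ZMod.natCast_eq_natCast_iff _ _ _).2 hn
  ext
  simpa using this

/-- The coefficient of the neutral element in the group algebra is invariant under an injective
endomorphism of the group. -/
lemma coeff_zero_mapDomainRingHom {R G : Type*} [CommRing R] [AddCommGroup G] (f : G →+ G)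
    (hf : Function.Injective f) (x : AddMonoidAlgebra R G) :
    (AddMonoidAlgebra.mapDomainRingHom R f x).coeff 0 = x.coeff 0 := by
  have := Finsupp.mapDomain_apply hf x.coeff 0
  rw [map_zero] at this
  exact this

/-- The Gauss sum argument: if `v ^ (p - 1) = 1` in `R`, `v b ≡ 1` modulo `p` and `v ^ n - 1` is
invertible in `R`, then `C_p(n, 0)` is divisible by `p ^ (⌊(n - 1) / (p - 1)⌋ + a)` in `R`
whenever `p ^ a ∣ n`. -/
lemma natCast_pow_dvd_sum_choose {R : Type*} [CommRing R] {p n a v b : ℕ} (hp : p.Prime)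
    (hodd : Odd p) (hn : 0 < n) (ha : p ^ a ∣ n) (hvb : v * b ≡ 1 [MOD p])
    (hv1 : (v : R) ^ (p - 1) = 1) (hunit : IsUnit ((v : R) ^ n - 1)) :
    (p : R) ^ ((n - 1) / (p - 1) + a) ∣
      ∑ k ∈ range (n + 1), if p ∣ k then (-1 : R) ^ k * n.choose k else 0 := by
  have := Fact.mk hp
  have hsum : ∑ i ∈ range (p - 1), (v : R) ^ i = 0 := by
    have h1 : IsUnit ((v : R) - 1) := by
      refine isUnit_of_dvd_unit ?_ hunit
      simpa using sub_dvd_pow_sub_pow (v : R) 1 n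
    have h2 := geom_sum_mul (v : R) (p - 1)
    rw [hv1, sub_self] at h2
    exact (h1.mul_left_eq_zero).1 h2
  obtain ⟨T, hTpow⟩ : ∃ T : AddMonoidAlgebra R (ZMod p),
      ∀ k : ℕ, T ^ k = AddMonoidAlgebra.single (k : ZMod p) 1 :=
    ⟨AddMonoidAlgebra.single 1 1, fun k => by simp [AddMonoidAlgebra.single_pow]⟩
  have hTp : T ^ p = 1 := by
    rw [hTpow, CharP.cast_eq_zero]
    rfl
  have hsumA : ∑ i ∈ range (p - 1), (v : AddMonoidAlgebra R (ZMod p)) ^ i = 0 := by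
    simpa only [map_sum, map_pow, map_natCast, map_zero]
      using congrArg (algebraMap R (AddMonoidAlgebra R (ZMod p))) hsum
  obtain ⟨L, hL⟩ : ∃ L : AddMonoidAlgebra R (ZMod p) →ₗ[R] R, ∀ x, L x = x.coeff 0 :=
    ⟨Finsupp.lapply 0 ∘ₗ (AddMonoidAlgebra.coeffLinearEquiv R).toLinearMap, fun _ => rfl⟩
  have hb0 : (b : ZMod p) ≠ 0 := by
    intro h0
    have := (ZMod.natCast_eq_natCast_iff _ _ _).2 hvb
    simp [h0] at this
  obtain ⟨σ, hσ⟩ : ∃ σ : AddMonoidAlgebra R (ZMod p) →+* AddMonoidAlgebra R (ZMod p),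
      σ = AddMonoidAlgebra.mapDomainRingHom R (AddMonoidHom.mulLeft (b : ZMod p)) := ⟨_, rfl⟩
  have hσL : ∀ x, L (σ x) = L x := fun x => by
    rw [hL, hL, hσ, coeff_zero_mapDomainRingHom _ (mul_right_injective₀ hb0)]
  have hσT : σ T = T ^ b := by
    have h1 := hTpow 1
    rw [pow_one] at h1
    rw [hTpow, h1, hσ]
    simp
  obtain ⟨w, hw⟩ : ∃ w, w = ∑ i ∈ range (p - 1),
      (v : AddMonoidAlgebra R (ZMod p)) ^ i * T ^ (b ^ i) := ⟨_, rfl⟩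
  have hσw : (v : AddMonoidAlgebra R (ZMod p)) * σ w = w := by
    have hbp : T ^ (b ^ (p - 1)) = T := by
      have h1 := hTpow 1
      rw [pow_one] at h1
      rw [hTpow, Nat.cast_pow, ZMod.pow_card_sub_one_eq_one hb0, h1, Nat.cast_one]
    have hvA : (v : AddMonoidAlgebra R (ZMod p)) ^ (p - 1) = 1 := by
      simpa only [map_pow, map_natCast, map_one]
        using congrArg (algebraMap R (AddMonoidAlgebra R (ZMod p))) hv1
    have e : (v : AddMonoidAlgebra R (ZMod p)) * σ w
        = ∑ i ∈ range (p - 1), (v : AddMonoidAlgebra R (ZMod p)) ^ (i + 1) * T ^ (b ^ (i + 1)) := by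
      rw [hw, map_sum, mul_sum]
      refine sum_congr rfl fun i _ => ?_
      rw [map_mul, map_pow, map_pow, map_natCast, hσT, ← pow_mul, pow_succ, pow_succ,
        mul_comm b]
      ring
    have e1 := sum_range_succ
      (fun i => (v : AddMonoidAlgebra R (ZMod p)) ^ i * T ^ (b ^ i)) (p - 1)
    rw [sum_range_succ', hvA, hbp, ← e, ← hw] at e1
    simpa using e1
  have hLw : L (w ^ n) = 0 := by
    have h1 : ((v : R) ^ n) • L (w ^ n) = L (w ^ n) := by
      have : ((v : R) ^ n) • (σ (w ^ n)) = w ^ n := by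
        rw [Algebra.smul_def, map_pow, map_pow, map_natCast, ← mul_pow, hσw]
      rw [← hσL (w ^ n), ← map_smul, this, hσL]
    refine (hunit.mul_right_eq_zero).1 ?_
    rw [sub_mul, one_mul, ← smul_eq_mul, h1, sub_self]
  obtain ⟨β, hβ⟩ := exists_sum_pow_mul_pow_eq hp hTp hvb hsumA
  obtain ⟨u, hu⟩ := exists_one_sub_pow_prime_eq hp hodd hTp
  obtain ⟨y, hy⟩ := natCast_pow_dvd_pow_succ hp hu (n - 1)
  obtain ⟨z, hz⟩ := natCast_pow_dvd_one_add_mul_pow_sub_one hp hu β ha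
  have hwn : (1 - T) ^ n = w ^ n - ((p : R) ^ ((n - 1) / (p - 1) + a)) • (y * z) := by
    rw [Nat.sub_add_cancel hn] at hy
    rw [Algebra.smul_def, map_pow, map_natCast, pow_add, hw, hβ, mul_pow]
    linear_combination (-(1 - T) ^ n) * hz - (p : AddMonoidAlgebra R (ZMod p)) ^ a * z * hy
  refine ⟨-L (y * z), ?_⟩
  trans L ((1 - T) ^ n)
  · rw [sub_eq_neg_add, add_pow, map_sum]
    refine sum_congr rfl fun k _ => ?_
    have e : (-T) ^ k * 1 ^ (n - k) * (n.choose k : AddMonoidAlgebra R (ZMod p))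
        = ((-1) ^ k * (n.choose k : R)) • T ^ k := by
      rw [Algebra.smul_def, neg_pow, map_mul, map_pow, map_neg, map_one, map_natCast, one_pow]
      ring
    rw [e, map_smul, hTpow, hL, AddMonoidAlgebra.coeff_single, Finsupp.single_apply]
    simp only [ZMod.natCast_eq_zero_iff, smul_eq_mul, mul_ite, mul_one, mul_zero]
  · rw [hwn, map_sub, hLw, map_smul, smul_eq_mul]
    ring

/-- The integer `C_p(n, 0)` is divisible by `p ^ (⌊(n - 1) / (p - 1)⌋ + a)` if `p ^ a ∣ n` and
`p - 1 ∤ n`. -/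
lemma pow_dvd_sum_choose {p n a : ℕ} (hp : p.Prime) (hodd : Odd p) (hn : 0 < n)
    (h : ¬ (p - 1) ∣ n) (ha : p ^ a ∣ n) :
    (p : ℤ) ^ ((n - 1) / (p - 1) + a) ∣
      ∑ k ∈ range (n + 1), if p ∣ k then (-1 : ℤ) ^ k * n.choose k else 0 := by
  have := Fact.mk hp
  obtain ⟨N, hN⟩ : ∃ N, N = (n - 1) / (p - 1) + a := ⟨_, rfl⟩
  obtain ⟨c, hcp, hc⟩ := exists_nat_primitive_root hp
  obtain ⟨b, -, hb⟩ := Nat.exists_mul_mod_eq_one_of_coprime hcp hp.one_lt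
  obtain ⟨v, hv⟩ : ∃ v, v = c ^ p ^ N := ⟨_, rfl⟩
  have hvc : v ≡ c [MOD p] := by
    rw [← ZMod.natCast_eq_natCast_iff]
    simp [hv, ZMod.pow_card_pow]
  have hvb : v * b ≡ 1 [MOD p] :=
    (hvc.mul_right b).trans (by rw [Nat.ModEq, hb, Nat.mod_eq_of_lt hp.one_lt])
  have hv1 : (v : ZMod (p ^ N)) ^ (p - 1) = 1 := by
    have h1 := Nat.ModEq.pow_totient (hcp.pow_right (N + 1))
    rw [Nat.totient_prime_pow_succ hp, pow_mul] at h1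
    have := (ZMod.natCast_eq_natCast_iff _ _ _).2 (h1.of_dvd (pow_dvd_pow p (Nat.le_succ N)))
    simpa [hv] using this
  have hunit : IsUnit ((v : ZMod (p ^ N)) ^ n - 1) := by
    have hcop : IsCoprime ((v : ℤ) ^ n - 1) ((p : ℤ) ^ N) := by
      refine IsCoprime.pow_right (IsCoprime.symm ?_)
      rw [Prime.coprime_iff_not_dvd (Nat.prime_iff_prime_int.1 hp)]
      intro hd
      refine h (hc n ((hvc.pow n).symm.trans ?_))
      refine (Nat.modEq_iff_dvd.2 ?_).symm
      push_cast
      exact hd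
    obtain ⟨x, y, hxy⟩ := hcop
    refine IsUnit.of_mul_eq_one (x : ZMod (p ^ N)) ?_
    have hp0 : (p : ZMod (p ^ N)) ^ N = 0 := by exact_mod_cast ZMod.natCast_self (p ^ N)
    have := congrArg (Int.cast : ℤ → ZMod (p ^ N)) hxy
    push_cast at this
    rw [hp0] at this
    linear_combination this
  have key := natCast_pow_dvd_sum_choose hp hodd hn ha hvb hv1 hunit
  have hp0 : (p : ZMod (p ^ N)) ^ N = 0 := by exact_mod_cast ZMod.natCast_self (p ^ N)
  rw [← hN, hp0, zero_dvd_iff] at key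
  rw [← hN, ← Nat.cast_pow, ← ZMod.intCast_zmod_eq_zero_iff_dvd _ (p ^ N), ← key]
  push_cast
  rfl

theorem stmt5 (p n : ℕ) (hp : p.Prime) (hodd : Odd p) (hn : 0 < n) (h : ¬ (p - 1) ∣ n) :
    Fp p n 0 = 0 ∨ (padicValNat p n : ℤ) ≤ padicValRat p (Fp p n 0) := by
  have := Fact.mk hp
  rw [or_iff_not_imp_left]
  intro hF
  have hdvd := pow_dvd_sum_choose hp hodd hn h (pow_padicValNat_dvd (p := p) (n := n))
  set D : ℤ := ∑ k ∈ range (n + 1), if p ∣ k then (-1 : ℤ) ^ k * n.choose k else 0 with hD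
  have hC : Cp p n 0 = (D : ℚ) := by
    rw [Cp, hD]
    push_cast
    refine sum_congr rfl fun k _ => ?_
    simp only [sub_zero, ← Int.dvd_iff_emod_eq_zero, Int.natCast_dvd_natCast]
  have hf : Int.fdiv ((n : ℤ) - 1) ((p : ℤ) - 1) = (((n - 1) / (p - 1) : ℕ) : ℤ) := by
    rw [Int.fdiv_eq_ediv_of_nonneg _ (by have := hp.one_le; omega)]
    push_cast [Nat.cast_sub hp.one_le, Nat.cast_sub hn]
    rfl
  rw [Fp, hC, hf, if_neg hn.ne', add_zero] at hF ⊢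
  have hD0 : (D : ℚ) ≠ 0 := right_ne_zero_of_mul hF
  rw [padicValRat.mul (left_ne_zero_of_mul hF) hD0, padicValRat.zpow, padicValRat.neg,
    padicValRat.self hp.one_lt, padicValRat.of_int]
  have := ((padicValInt_dvd_iff _ _).1 hdvd).resolve_left (by exact_mod_cast hD0)
  push_cast at this ⊢
  have := (Nat.cast_le (α := ℤ)).2 this
  push_cast at this
  linarith
end

section
/- Let p be an odd prime and let n be a positive even integer with (p−1) ∤ n. Let b,m be positive integers with b > 2·⌊(pn−1)/(p−1)⌋. Then (2/(pn))·(pn−1)!·S(m·φ(p^b), pn−1)/(−p)^{⌊(pn−2)/(p−1)⌋} ≡ −(pn−1)!·S(m·φ(p^b), pn)/(−p)^{⌊(pn−1)/(p−1)⌋} ≡ (n_*!/(n_*+1))·B_{p−1−n_*} (mod p). -/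
open Finset

/-- `n_*`: the unique integer in `{1,…,p-1}` with `n_* ≡ n (mod p-1)`. -/
def nLow (p n : ℕ) : ℕ := ((((n:ℤ) - 1) % ((p:ℤ) - 1)) + 1).toNat

/-- Stirling number of the second kind,
`S(M,N) = (1/N!) ∑_{j=0}^N (-1)^{N-j} binom(N,j) j^M`. -/
def stirling2 (M N : ℕ) : ℚ :=
  (1 / (N.factorial : ℚ)) * ∑ j ∈ range (N+1), (-1:ℚ)^(N-j) * (N.choose j : ℚ) * (j:ℚ)^M

/-- The alternating sum of the binomial coefficients `binom(N, j)` over the multiples `j` of `p`. -/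
def fleckSum (p N : ℕ) : ℤ :=
  ∑ j ∈ range (N + 1) with p ∣ j, (-1) ^ j * (N.choose j : ℤ)

theorem fleckSum_eq_sum_range {p N Q : ℕ} (hp : 0 < p) (hQ : N < p * Q) :
    fleckSum p N = ∑ q ∈ range Q, (-1) ^ (p * q) * (N.choose (p * q) : ℤ) := by
  have hsub : (range (N + 1)).filter (p ∣ ·) ⊆ (range Q).image (p * ·) := by
    intro j hj
    obtain ⟨hj, q, rfl⟩ := mem_filter.1 hj
    refine mem_image.2 ⟨q, mem_range.2 ?_, rfl⟩
    exact Nat.lt_of_mul_lt_mul_left (lt_of_le_of_lt (Nat.lt_succ_iff.1 (mem_range.1 hj)) hQ)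
  rw [fleckSum, sum_subset hsub, sum_image]
  · exact fun a _ b _ hab => Nat.eq_of_mul_eq_mul_left hp hab
  · intro j hj hj'
    obtain ⟨q, -, rfl⟩ := mem_image.1 hj
    have : N < p * q := by
      by_contra hlt
      exact hj' (mem_filter.2 ⟨mem_range.2 (by omega), dvd_mul_right p q⟩)
    simp [Nat.choose_eq_zero_of_lt this]

theorem two_mul_fleckSum_pred {p N : ℕ} (hN : 0 < N) (heven : Even N) (hpN : p ∣ N) :
    2 * fleckSum p (N - 1) = fleckSum p N := by
  obtain ⟨M, rfl⟩ : ∃ M, N = M + 1 := ⟨N - 1, by omega⟩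
  have hleft : ((M + 1 : ℕ) : ℤ) * fleckSum p M = ∑ j ∈ range (M + 2) with p ∣ j,
      (-1) ^ j * ((M + 1).choose j : ℤ) * ((M + 1 : ℕ) - j : ℤ) := by
    have hext : fleckSum p M = ∑ j ∈ range (M + 2) with p ∣ j, (-1) ^ j * (M.choose j : ℤ) := by
      rw [fleckSum, sum_filter, sum_filter, sum_range_succ _ (M + 1)]
      simp
    rw [hext, mul_sum]
    refine sum_congr rfl fun j hj => ?_
    have hj : j ≤ M + 1 := by have := mem_range.1 (mem_filter.1 hj).1; omega
    have := Nat.choose_mul_succ_eq M j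
    zify [hj] at this
    push_cast
    linear_combination (-1) ^ j * this
  have hright : ((M + 1 : ℕ) : ℤ) * fleckSum p M = ∑ j ∈ range (M + 2) with p ∣ j,
      (-1) ^ j * ((M + 1).choose j : ℤ) * (j : ℤ) := by
    rw [hleft]
    refine sum_nbij' (fun j => M + 1 - j) (fun j => M + 1 - j) ?_ ?_ ?_ ?_ ?_
    · intro j hj
      simp only [mem_filter, mem_range] at hj ⊢
      exact ⟨by omega, Nat.dvd_sub hpN hj.2⟩
    · intro j hj
      simp only [mem_filter, mem_range] at hj ⊢
      exact ⟨by omega, Nat.dvd_sub hpN hj.2⟩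
    · intro j hj
      simp only [mem_filter, mem_range] at hj ⊢
      omega
    · intro j hj
      simp only [mem_filter, mem_range] at hj ⊢
      omega
    · intro j hj
      simp only [mem_filter, mem_range] at hj
      have hj' : j ≤ M + 1 := by omega
      rw [Nat.choose_symm hj', Nat.cast_sub hj']
      congr 2
      rcases Nat.even_or_odd j with h | h
      · rw [h.neg_one_pow, (heven.tsub h).neg_one_pow]
      · rw [h.neg_one_pow, (Nat.Even.sub_odd hj' heven h).neg_one_pow]
  have hsum : ((M + 1 : ℕ) : ℤ) * (2 * fleckSum p M) = (M + 1 : ℕ) * fleckSum p (M + 1) := by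
    rw [two_mul, mul_add]
    nth_rewrite 1 [hleft]
    rw [hright, ← sum_add_distrib, fleckSum, mul_sum]
    exact sum_congr rfl fun j _ => by ring
  exact mul_left_cancel₀ (by positivity) hsum

theorem pow_dvd_sum_add_fleckSum {p b m N : ℕ} (hp : p.Prime) (hm : 0 < m) (hN : 0 < N) :
    (p : ℤ) ^ b ∣ (∑ j ∈ range (N + 1),
      (-1) ^ (N - j) * (N.choose j : ℤ) * (j : ℤ) ^ (m * Nat.totient (p ^ b))) +
        (-1) ^ N * fleckSum p N := by
  have hzero : ∑ j ∈ range (N + 1), (-1 : ℤ) ^ (N - j) * (N.choose j : ℤ) = 0 := by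
    have := add_pow (1 : ℤ) (-1) N
    simpa [zero_pow hN.ne'] using this.symm
  have hfleck : (-1) ^ N * fleckSum p N = ∑ j ∈ range (N + 1),
      (-1) ^ (N - j) * (N.choose j : ℤ) * (if p ∣ j then 1 else 0) := by
    rw [fleckSum, sum_filter, mul_sum]
    refine sum_congr rfl fun j hj => ?_
    split_ifs
    · have hj : j ≤ N := Nat.lt_succ_iff.1 (mem_range.1 hj)
      have hsq : ((-1 : ℤ) ^ j) * (-1) ^ j = 1 := by rw [← mul_pow]; simp
      rw [← Nat.sub_add_cancel hj, pow_add, Nat.sub_add_cancel hj]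
      linear_combination (-1) ^ (N - j) * (N.choose j : ℤ) * hsq
    · simp
  rw [hfleck, ← sum_add_distrib]
  have hsub : ∀ S : ℤ,
      (p : ℤ) ^ b ∣ S - ∑ j ∈ range (N + 1), (-1 : ℤ) ^ (N - j) * (N.choose j : ℤ) →
      (p : ℤ) ^ b ∣ S := fun S hS => by rwa [hzero, sub_zero] at hS
  refine hsub _ ?_
  rw [← sum_sub_distrib]
  refine dvd_sum fun j _ => ?_
  rw [← mul_add, ← mul_sub_one]
  refine Dvd.dvd.mul_left ?_ _
  split_ifs with hj
  · rw [add_sub_cancel_right]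
    have hb : b ≤ m * Nat.totient (p ^ b) := by
      rcases Nat.eq_zero_or_pos b with rfl | hb
      · simp
      · rw [Nat.totient_prime_pow hp hb]
        calc b ≤ p ^ (b - 1) := by have := Nat.lt_pow_self hp.one_lt (n := b - 1); omega
          _ = 1 * (p ^ (b - 1) * 1) := by ring
          _ ≤ m * (p ^ (b - 1) * (p - 1)) := by
            gcongr <;> have := hp.two_le <;> omega
    exact (pow_dvd_pow _ hb).trans (pow_dvd_pow_of_dvd (Int.natCast_dvd_natCast.2 hj) _)
  · have hcop : Nat.Coprime j (p ^ b) :=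
      ((Nat.Prime.coprime_iff_not_dvd hp).2 hj).symm.pow_right b
    have := ((Nat.ModEq.pow_totient hcop).pow m)
    rw [one_pow, ← pow_mul, mul_comm] at this
    have := (Nat.modEq_iff_dvd.1 this.symm)
    simpa using this

namespace PowerSeries

theorem mk_fleckSum_mul {p : ℕ} (hp : Odd p) :
    (mk fun N => (fleckSum p N : ℚ)) * ((1 - X) ^ p + X ^ p) = (1 - X) ^ (p - 1) := by
  have hp0 : 0 < p := hp.pos
  set I : ℚ⟦X⟧ := mk 1 with hI
  have hI1 : I * (1 - X) = 1 := mk_one_mul_one_sub_eq_one ℚ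
  have hcoeff : ∀ d N, coeff N (X ^ d * I ^ (d + 1)) = (N.choose d : ℚ) := by
    intro d N
    rw [hI, mk_one_pow_eq_mk_choose_add, coeff_X_pow_mul']
    split_ifs with h
    · simp [Nat.add_sub_cancel' h]
    · simp [Nat.choose_eq_zero_of_lt (not_le.1 h)]
  have hone : I ^ (p - 1 + 1) * (1 - X) ^ (p - 1 + 1) = 1 := by rw [← mul_pow, hI1, one_pow]
  rw [Nat.sub_add_cancel hp0] at hone
  have hpart : ∀ Q, (∑ q ∈ range Q, (-1) ^ (p * q) * (X ^ (p * q) * I ^ (p * q + 1))) *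
      ((1 - X) ^ p + X ^ p) = (1 - X) ^ (p - 1) * (1 - (-(X * I) ^ p) ^ Q) := by
    intro Q
    have hterm : ∀ q ∈ range Q, (-1) ^ (p * q) * (X ^ (p * q) * I ^ (p * q + 1)) =
        I * (-(X * I) ^ p) ^ q := by
      intro q _
      rw [← hp.neg_pow, ← pow_mul, neg_pow (X * I), mul_pow]
      ring
    have hfac : (1 - X) ^ p + X ^ p = (1 - X) ^ p * (1 - -(X * I) ^ p) := by
      rw [mul_pow]
      linear_combination -X ^ p * hone
    have hpow : I * (1 - X) ^ p = (1 - X) ^ (p - 1) := by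
      conv_lhs => rw [← Nat.sub_add_cancel hp0, pow_succ]
      linear_combination (1 - X) ^ (p - 1) * hI1
    rw [sum_congr rfl hterm, ← mul_sum, hfac, ← hpow, ← geom_sum_mul_neg]
    ring
  ext m
  have hdvd : (X : ℚ⟦X⟧) ^ (m + 1) ∣ (mk fun N => (fleckSum p N : ℚ)) -
      ∑ q ∈ range (m + 1), (-1) ^ (p * q) * (X ^ (p * q) * I ^ (p * q + 1)) := by
    rw [X_pow_dvd_iff]
    intro N hN
    have hlt : N < p * (m + 1) := hN.trans_le (Nat.le_mul_of_pos_left _ hp0)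
    rw [map_sub, coeff_mk, fleckSum_eq_sum_range hp0 hlt, map_sum, sub_eq_zero]
    push_cast
    refine sum_congr rfl fun q _ => ?_
    rw [← hcoeff, ← map_one C, ← map_neg, ← map_pow, coeff_C_mul]
  have hsmall : (X : ℚ⟦X⟧) ^ (m + 1) ∣
      (1 - X) ^ (p - 1) * (1 - (-(X * I) ^ p) ^ (m + 1)) - (1 - X) ^ (p - 1) := by
    have : (X : ℚ⟦X⟧) ∣ -(X * I) ^ p :=
      ((dvd_pow_self X hp0.ne').trans (by rw [mul_pow]; exact dvd_mul_right _ _)).neg_right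
    rw [mul_sub, mul_one, sub_sub_cancel_left]
    exact ((pow_dvd_pow_of_dvd this _).mul_left _).neg_right
  have := dvd_add (hdvd.mul_right ((1 - X) ^ p + X ^ p)) hsmall
  rw [sub_mul, hpart, sub_add_sub_cancel] at this
  have := X_pow_dvd_iff.1 this m (Nat.lt_succ_self m)
  rwa [map_sub, sub_eq_zero] at this

/-- The expansion of Girard and Waring for the power sums of the numbers `1 - ζ` with `ζ ^ p = 1`,
in terms of a power series `H` with `p H = (1 + X) ^ p - X ^ p - 1`. -/
theorem fleckSum_eq_sum_coeff {p N : ℕ} (hp : Odd p) (hN : 0 < N) (heven : Even N) {H : ℚ⟦X⟧}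
    (hX : X ∣ H) (hH : (p : ℚ⟦X⟧) * H = (1 + X) ^ p - X ^ p - 1) :
    (fleckSum p N : ℚ) =
      -N * ∑ k ∈ range (N + 1), (-p : ℚ) ^ k * (coeff N (H ^ (k + 1)) / (k + 1)) := by
  have hp0 : 0 < p := hp.pos
  obtain ⟨M, rfl⟩ : ∃ M, N = M + 1 := ⟨N - 1, by omega⟩
  set a : ℚ⟦X⟧ := rescale (-1) (mk fun N => (fleckSum p N : ℚ)) with ha
  have hcoeff : coeff (M + 1) a = fleckSum p (M + 1) := by
    rw [ha, coeff_rescale, heven.neg_one_pow, one_mul, coeff_mk]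
  have hgen : a * (1 + (p : ℚ⟦X⟧) * H) = (1 + X) ^ (p - 1) := by
    have := congrArg (rescale (-1 : ℚ)) (mk_fleckSum_mul hp)
    simp only [map_mul, map_add, map_pow, map_sub, map_one, rescale_X, ← ha] at this
    simp only [map_neg, map_one, neg_mul, one_mul, sub_neg_eq_add, hp.neg_pow] at this
    rw [← this, hH]
    ring
  have hderiv : (p : ℚ⟦X⟧) * d⁄dX ℚ H =
      (p : ℚ⟦X⟧) * (1 + X) ^ (p - 1) - (p : ℚ⟦X⟧) * X ^ (p - 1) := by
    have := congrArg (d⁄dX ℚ) hH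
    rw [Derivation.leibniz, map_sub, map_sub, derivative_pow, derivative_pow] at this
    simpa using this
  have hX1 : (X : ℚ⟦X⟧) * X ^ (p - 1) = X ^ p := by rw [← pow_succ', Nat.sub_add_cancel hp0]
  have hX2 : (1 + X : ℚ⟦X⟧) * (1 + X) ^ (p - 1) = (1 + X) ^ p := by
    rw [← pow_succ', Nat.sub_add_cancel hp0]
  set c : ℚ⟦X⟧ := -(p * H) with hc
  have hlog : (a - 1) * (1 - c) = -(X * d⁄dX ℚ H) := by
    have hpne : (p : ℚ⟦X⟧) ≠ 0 := by
      rw [← map_natCast (C (R := ℚ)), map_ne_zero_iff C C_injective]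
      exact_mod_cast hp0.ne'
    refine mul_left_cancel₀ hpne ?_
    linear_combination (p : ℚ⟦X⟧) * hgen + X * hderiv + (p : ℚ⟦X⟧) * hX2 - (p : ℚ⟦X⟧) * hX1 -
      (p : ℚ⟦X⟧) * hH
  have hexp : a = 1 - X * (d⁄dX ℚ H * ∑ k ∈ range (M + 2), c ^ k) + c ^ (M + 2) * (a - 1) := by
    linear_combination (∑ k ∈ range (M + 2), c ^ k) * hlog - (a - 1) * geom_sum_mul_neg c (M + 2)
  have hcX : (X : ℚ⟦X⟧) ^ (M + 2) ∣ c ^ (M + 2) * (a - 1) :=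
    (pow_dvd_pow_of_dvd (hX.mul_left _).neg_right _).mul_right _
  have hterm : ∀ k : ℕ, coeff M (d⁄dX ℚ H * c ^ k) =
      (M + 1 : ℕ) * ((-p : ℚ) ^ k * (coeff (M + 1) (H ^ (k + 1)) / (k + 1))) := by
    intro k
    have hpow : d⁄dX ℚ H * c ^ k =
        C ((-p : ℚ) ^ k * (k + 1 : ℚ)⁻¹) * d⁄dX ℚ (H ^ (k + 1)) := by
      have hk : (C ((k + 1 : ℚ)⁻¹) : ℚ⟦X⟧) * ((k + 1 : ℕ) : ℚ⟦X⟧) = 1 := by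
        rw [← map_natCast (C (R := ℚ)), ← map_mul, Nat.cast_succ,
          inv_mul_cancel₀ (by positivity), map_one]
      rw [derivative_pow, Nat.add_sub_cancel, hc, map_mul, map_pow, map_neg, map_natCast,
        ← neg_mul, mul_pow]
      linear_combination -(-p : ℚ⟦X⟧) ^ k * H ^ k * d⁄dX ℚ H * hk
    rw [hpow, coeff_C_mul, coeff_derivative]
    push_cast
    field_simp
  rw [← hcoeff, hexp, map_add, map_sub, X_pow_dvd_iff.1 hcX _ (by omega), coeff_succ_X_mul,
    coeff_one, if_neg (by omega), mul_sum, map_sum, sum_congr rfl fun k _ => hterm k, ← mul_sum]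
  ring

end PowerSeries

namespace PowerSeries

theorem one_add_X_mul_derivative_log : (1 + X) * d⁄dX ℚ (log ℚ) = 1 := by
  rw [deriv_log]
  ext n
  rw [add_mul, one_mul]
  cases n with
  | zero => simp
  | succ n => simp [coeff_succ_X_mul, coeff_one, pow_succ]

theorem exp_subst_log : (exp ℚ).subst (log ℚ) = 1 + X := by
  have hderiv := one_add_X_mul_derivative_log
  have hconst : constantCoeff ((exp ℚ).subst (log ℚ)) = 1 := by
    have := constantCoeff_subst_eq_zero (a := log ℚ) constantCoeff_log (exp ℚ - 1) (by simp)
    rw [subst_sub HasSubst.log, ← map_one (C (R := ℚ)), subst_C] at this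
    rw [map_sub, sub_eq_zero] at this
    exact this.trans (by simp)
  have hunit : IsUnit (1 + X : ℚ⟦X⟧) := isUnit_iff_constantCoeff.2 (by simp)
  obtain ⟨u, hu⟩ := hunit
  have hdiv : (exp ℚ).subst (log ℚ) * (↑u⁻¹ : ℚ⟦X⟧) = 1 := by
    refine derivative.ext ?_ ?_
    · have hinv : (↑u⁻¹ : ℚ⟦X⟧) * (1 + X) = 1 := by rw [← hu]; simp
      have hD : d⁄dX ℚ (log ℚ) = ↑u⁻¹ := by
        linear_combination (↑u⁻¹ : ℚ⟦X⟧) * hderiv - d⁄dX ℚ (log ℚ) * hinv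
      rw [Derivation.leibniz, derivative_inv, derivative_subst HasSubst.log, derivative_exp, hD, hu]
      simp only [smul_eq_mul, map_add, derivative_X, Derivation.map_one_eq_zero]
      ring
    · have : constantCoeff (↑u⁻¹ : ℚ⟦X⟧) * constantCoeff (u : ℚ⟦X⟧) = 1 := by
        rw [← map_mul]; simp
      rw [hu] at this
      simp only [map_add, map_one, constantCoeff_X, add_zero, mul_one] at this
      simp [hconst, this]
  calc _ = (exp ℚ).subst (log ℚ) * (↑u⁻¹ : ℚ⟦X⟧) * u := by simp [mul_assoc]
    _ = _ := by rw [hdiv, one_mul, hu]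

/-- Lagrange inversion for `log (1 + X)`: if `Y = X / log (1 + X)`, then
`[X ^ j] Y ^ j = B_j⁺ / j!`. -/
theorem coeff_pow_eq_bernoulli'_div_factorial {Y : ℚ⟦X⟧} (hY : log ℚ * Y = X) (j : ℕ) :
    coeff j (Y ^ j) = bernoulli' j / j.factorial := by
  obtain ⟨L, hL⟩ : X ∣ log ℚ := X_dvd_iff.2 constantCoeff_log
  have hLY : L * Y = 1 := mul_left_cancel₀ X_ne_zero (by rw [← mul_assoc, ← hL, hY, mul_one])
  have hderiv := one_add_X_mul_derivative_log
  set D := d⁄dX ℚ (log ℚ) with hD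
  have hDL : D = L + X * d⁄dX ℚ L := by
    rw [hD, hL, Derivation.leibniz, derivative_X]
    simp only [smul_eq_mul]
    ring
  have hber : (bernoulli'PowerSeries ℚ).subst (log ℚ) * D = L := by
    have := congrArg (subst (log ℚ)) (bernoulli'PowerSeries_mul_exp_sub_one ℚ)
    rw [subst_mul HasSubst.log, subst_mul HasSubst.log, subst_sub HasSubst.log, exp_subst_log,
      subst_X HasSubst.log, ← map_one (C (R := ℚ)), subst_C] at this
    have hX : X * ((bernoulli'PowerSeries ℚ).subst (log ℚ)) = X * (L * (1 + X)) := by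
      rw [hL] at this ⊢
      have h1 : (MvPowerSeries.C (1 : ℚ) : ℚ⟦X⟧) = 1 := map_one _
      rw [h1, map_one] at this
      linear_combination this
    rw [mul_left_cancel₀ X_ne_zero hX]
    linear_combination L * hderiv
  have hvanish : ∀ m, 0 < m → coeff m (Y ^ (m + 1) * D) = 0 := by
    intro m hm
    obtain ⟨k, rfl⟩ : ∃ k, m = k + 1 := ⟨m - 1, by omega⟩
    have hLY' : L * d⁄dX ℚ Y + Y * d⁄dX ℚ L = 0 := by
      have := congrArg (d⁄dX ℚ) hLY
      rwa [Derivation.leibniz, Derivation.map_one_eq_zero] at this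
    have hexp : ((k + 1 : ℕ) : ℚ⟦X⟧) * (Y ^ (k + 1 + 1) * D) =
        ((k + 1 : ℕ) : ℚ⟦X⟧) * Y ^ (k + 1) - X * d⁄dX ℚ (Y ^ (k + 1)) := by
      rw [derivative_pow, hDL, Nat.add_sub_cancel]
      linear_combination ((k + 1 : ℕ) : ℚ⟦X⟧) * (Y ^ (k + 1) * hLY
        + X * Y ^ (k + 1) * hLY' - X * Y ^ k * d⁄dX ℚ Y * hLY)
    have := congrArg (coeff (k + 1)) hexp
    rw [map_sub, coeff_succ_X_mul, coeff_derivative, ← nsmul_eq_mul, ← nsmul_eq_mul, map_nsmul,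
      map_nsmul, nsmul_eq_mul, nsmul_eq_mul] at this
    have hk : ((k + 1 : ℕ) : ℚ) ≠ 0 := by positivity
    refine mul_left_cancel₀ hk ?_
    rw [this]
    push_cast
    ring
  have hsplit := congrArg (subst (log ℚ))
    (eq_X_pow_mul_shift_add_trunc (j + 1) (bernoulli'PowerSeries ℚ))
  rw [subst_add HasSubst.log, subst_mul HasSubst.log, subst_pow HasSubst.log,
    subst_X HasSubst.log, subst_coe HasSubst.log] at hsplit
  have hmain : Y ^ j = X ^ (j + 1) * (L ^ (j + 1) *
      (mk fun i => coeff (i + (j + 1)) (bernoulli'PowerSeries ℚ)).subst (log ℚ) * D * Y ^ (j + 1)) +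
      ∑ i ∈ range (j + 1), C (bernoulli' i / i.factorial) *
        (X ^ i * (Y ^ (j - i + 1) * D)) := by
    have hYj : Y ^ j = (bernoulli'PowerSeries ℚ).subst (log ℚ) * D * Y ^ (j + 1) := by
      rw [hber, pow_succ']
      linear_combination -Y ^ j * hLY
    have haeval : Polynomial.aeval (log ℚ) (trunc (j + 1) (bernoulli'PowerSeries ℚ)) =
        ∑ i ∈ range (j + 1), C (bernoulli' i / i.factorial) * (X ^ i * L ^ i) := by
      rw [Polynomial.aeval_eq_sum_range' (natDegree_trunc_lt _ _)]
      refine sum_congr rfl fun i hi => ?_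
      rw [coeff_trunc, if_pos (mem_range.1 hi), ← mul_pow, ← hL, smul_eq_C_mul]
      simp [bernoulli'PowerSeries]
    rw [hYj, hsplit, haeval, add_mul, add_mul, sum_mul, sum_mul]
    congr 1
    · nth_rewrite 1 [hL]
      rw [mul_pow]
      ring
    · refine sum_congr rfl fun i hi => ?_
      have : L ^ i * Y ^ (j + 1) = Y ^ (j - i + 1) := by
        rw [show j + 1 = i + (j - i + 1) by have := mem_range.1 hi; omega, pow_add, ← mul_assoc,
          ← mul_pow, hLY, one_pow, one_mul]
      rw [← this]
      ring
  rw [hmain, map_add, coeff_X_pow_mul', if_neg (by omega), zero_add, map_sum, sum_range_succ,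
    sum_eq_zero, zero_add, coeff_C_mul, coeff_X_pow_mul', if_pos le_rfl]
  · have hL0 : constantCoeff L = 1 := by
      have := congrArg (coeff 1) hL
      rw [coeff_one_log, coeff_succ_X_mul] at this
      simpa using this.symm
    have hY0 : constantCoeff Y = 1 := by
      have := congrArg constantCoeff hLY
      simpa [hL0] using this
    simp [hDL, hL0, hY0]
  · intro i hi
    have hi := mem_range.1 hi
    rw [coeff_C_mul, coeff_X_pow_mul', if_pos hi.le, hvanish _ (by omega), mul_zero]

end PowerSeries

/-- The polynomial `((1 + X) ^ p - X ^ p - 1) / (p X)`. -/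
noncomputable def binomQuot (p : ℕ) : Polynomial ℤ :=
  ∑ i ∈ range (p - 1), Polynomial.monomial i ((p.choose (i + 1) / p : ℕ) : ℤ)

namespace binomQuot

open Polynomial

theorem coeff_eq (p i : ℕ) :
    (binomQuot p).coeff i = if i < p - 1 then ((p.choose (i + 1) / p : ℕ) : ℤ) else 0 := by
  simp [binomQuot, coeff_monomial]

theorem coeff_X_mul_eq {p : ℕ} (hp : p.Prime) (i : ℕ) :
    (p : ℤ) * (X * binomQuot p).coeff i =
      if 0 < i ∧ i < p then (p.choose i : ℤ) else 0 := by
  cases i with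
  | zero => simp
  | succ i =>
    rw [coeff_X_mul, coeff_eq]
    by_cases h : i + 1 < p
    · rw [if_pos (by omega), if_pos ⟨by omega, h⟩]
      exact_mod_cast Nat.mul_div_cancel' (hp.dvd_choose_self (by omega) h)
    · rw [if_neg (by omega), if_neg (by tauto), mul_zero]

theorem mul_X_mul {p : ℕ} (hp : p.Prime) :
    (p : ℤ[X]) * (X * binomQuot p) = (1 + X) ^ p - X ^ p - 1 := by
  ext i
  have := hp.pos
  rw [← C_eq_natCast, coeff_C_mul, coeff_X_mul_eq hp, coeff_sub, coeff_sub, coeff_one_add_X_pow,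
    coeff_X_pow, coeff_one]
  rcases Nat.eq_zero_or_pos i with rfl | hi
  · simp [hp.ne_zero.symm]
  rcases lt_trichotomy i p with h | rfl | h
  · simp [hi, h, h.ne, hi.ne']
  · simp [hi.ne']
  · simp [h.not_gt, h.ne', hi.ne', Nat.choose_eq_zero_of_lt h]

theorem reflect_X_mul {p : ℕ} (hp : p.Prime) :
    reflect p (X * binomQuot p) = X * binomQuot p := by
  ext i
  have hp0 : (p : ℤ) ≠ 0 := by exact_mod_cast hp.ne_zero
  refine mul_left_cancel₀ hp0 ?_
  rw [coeff_reflect, coeff_X_mul_eq hp, coeff_X_mul_eq hp]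
  rcases le_or_gt i p with h | h
  · rw [revAt_le h, Nat.choose_symm h]
    congr 1
    exact propext ⟨by omega, by omega⟩
  · rw [revAt_eq_self_of_lt h]

theorem natDegree_X_mul_le {p : ℕ} (hp : p.Prime) : (X * binomQuot p).natDegree ≤ p := by
  refine natDegree_le_iff_coeff_eq_zero.2 fun i hi => ?_
  have hp0 : (p : ℤ) ≠ 0 := by exact_mod_cast hp.ne_zero
  refine mul_left_cancel₀ hp0 ?_
  rw [coeff_X_mul_eq hp, if_neg (by omega), mul_zero]

theorem reflect_X_mul_pow {p : ℕ} (hp : p.Prime) (K : ℕ) :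
    reflect (p * K) ((X * binomQuot p) ^ K) = (X * binomQuot p) ^ K := by
  induction K with
  | zero => simp
  | succ K ih =>
    rw [pow_succ, mul_add_one, reflect_mul _ _ _ (natDegree_X_mul_le hp), ih, reflect_X_mul hp]
    exact natDegree_pow_le.trans ((Nat.mul_le_mul_left K (natDegree_X_mul_le hp)).trans_eq
      (mul_comm K p))

theorem coeff_X_mul_pow {p : ℕ} (hp : p.Prime) {K N j : ℕ} (hj : K * (p - 1) = N + j) :
    ((X * binomQuot p) ^ K).coeff N = (binomQuot p ^ K).coeff j := by
  have hpK : p * K = N + j + K := by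
    rw [← hj, ← Nat.sub_add_cancel hp.one_le, Nat.add_sub_cancel]; ring
  rw [← reflect_X_mul_pow hp, coeff_reflect, revAt_le (by omega), mul_pow, coeff_X_pow_mul',
    if_pos (by omega)]
  congr 1
  omega

theorem coeff_X_mul_pow_of_lt {p : ℕ} (hp : p.Prime) {K N : ℕ} (hN : K * (p - 1) < N) :
    ((X * binomQuot p) ^ K).coeff N = 0 := by
  have hpK : p * K = K * (p - 1) + K := by
    rw [← Nat.sub_add_cancel hp.one_le, Nat.add_sub_cancel]; ring
  rw [← reflect_X_mul_pow hp, coeff_reflect]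
  rcases le_or_gt N (p * K) with h | h
  · rw [revAt_le h, mul_pow, coeff_X_pow_mul', if_neg (by omega)]
  · rw [revAt_eq_self_of_lt h]
    refine coeff_eq_zero_of_natDegree_lt (lt_of_le_of_lt ?_ h)
    exact natDegree_pow_le.trans ((Nat.mul_le_mul_left K (natDegree_X_mul_le hp)).trans_eq
      (mul_comm K p))

theorem mul_coeff_pow (p K j : ℕ) :
    ((j + 1 : ℕ) : ℤ) * (binomQuot p ^ (K + 1)).coeff (j + 1) =
      (K + 1 : ℕ) * (binomQuot p ^ K * derivative (binomQuot p)).coeff j := by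
  have := congrArg (coeff · j) (derivative_pow (binomQuot p) (K + 1))
  simp only [coeff_derivative, mul_assoc, coeff_C_mul, Nat.add_sub_cancel] at this
  rw [mul_comm, ← this]
  push_cast
  ring

theorem coeff_zero {p : ℕ} (hp : p.Prime) : (binomQuot p).coeff 0 = 1 := by
  have := hp.two_le
  rw [coeff_eq, if_pos (by omega), zero_add, Nat.choose_one_right, Nat.div_self hp.pos,
    Nat.cast_one]

end binomQuot

namespace ZMod

variable {p : ℕ} [Fact p.Prime]

theorem choose_pred_prime {k : ℕ} (hk : k < p) : ((p - 1).choose k : ZMod p) = (-1) ^ k := by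
  have hp : p.Prime := Fact.out
  induction k with
  | zero => simp
  | succ k ih =>
    have hpas := Nat.choose_succ_succ (p - 1) k
    rw [Nat.succ_eq_add_one, Nat.sub_add_cancel hp.one_le] at hpas
    have hdvd : ((p.choose (k + 1) : ℕ) : ZMod p) = 0 :=
      (natCast_eq_zero_iff _ _).2 (hp.dvd_choose_self (by omega) hk)
    rw [hpas, Nat.cast_add, ih (by omega)] at hdvd
    rw [pow_succ]
    linear_combination hdvd

theorem factorial_mul_factorial_eq_neg_one {a b : ℕ} (hab : a + b + 1 = p) (hb : Even b) :
    (a.factorial : ZMod p) * b.factorial = -1 := by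
  have h := Nat.add_choose_mul_factorial_mul_factorial a b
  have hab' : a + b = p - 1 := by omega
  have := congrArg (Nat.cast : ℕ → ZMod p) h
  rw [hab', wilsons_lemma, Nat.cast_mul, Nat.cast_mul, choose_pred_prime (by omega),
    hb.neg_one_pow, one_mul] at this
  exact this

theorem coeff_binomQuot {i : ℕ} (hi : i < p - 1) :
    ((i + 1 : ℕ) : ZMod p) * (((binomQuot p).coeff i : ℤ) : ZMod p) = (-1) ^ i := by
  have hp : p.Prime := Fact.out
  rw [← choose_pred_prime (p := p) (by omega), binomQuot.coeff_eq, if_pos hi]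
  have h1 : p.choose (i + 1) / p * p = p.choose (i + 1) :=
    Nat.div_mul_cancel (hp.dvd_choose_self (by omega) (by omega))
  have h2 := Nat.add_one_mul_choose_eq (p - 1) i
  rw [Nat.sub_add_cancel hp.one_le] at h2
  have h3 : (i + 1) * (p.choose (i + 1) / p) = (p - 1).choose i :=
    Nat.eq_of_mul_eq_mul_left hp.pos (by linear_combination (i + 1) * h1 - h2)
  rw [← h3, Nat.cast_mul, Int.cast_natCast]

end ZMod

section

variable {p : ℕ} [Fact p.Prime]

theorem X_pow_dvd_binomQuot_pow_sub_one (r : ℕ) :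
    (Polynomial.X : Polynomial (ZMod p)) ^ p ∣
      (binomQuot p).map (Int.castRingHom (ZMod p)) ^ (p * r) - 1 := by
  have hp : p.Prime := Fact.out
  set g := (binomQuot p).map (Int.castRingHom (ZMod p)) with hg
  have hX : Polynomial.X ∣ g - 1 := by
    rw [Polynomial.X_dvd_iff]
    simp [hg, binomQuot.coeff_zero hp]
  have hpow : g ^ p - 1 = (g - 1) ^ p := by rw [sub_pow_char, one_pow]
  rw [pow_mul, ← one_pow r]
  exact (hpow ▸ pow_dvd_pow_of_dvd hX p).trans (sub_dvd_pow_sub_pow _ _ _)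

open PowerSeries in
theorem exists_padicInt_eq_bernoulli' {K j : ℕ} (hj : j < p - 1) (hK : p ∣ K + j) :
    ∃ w : ℤ_[p], (w : ℚ_[p]) = ((bernoulli' j / j.factorial : ℚ) : ℚ_[p]) ∧
      PadicInt.toZMod w = (((binomQuot p ^ K).coeff j : ℤ) : ZMod p) := by
  have hp : p.Prime := Fact.out
  have hinv : ∀ i < p - 1, ∃ v : ℤ_[p], ((i + 1 : ℕ) : ℤ_[p]) * v = 1 := by
    intro i hi
    refine ⟨_, PadicInt.mul_inv ?_⟩
    rw [PadicInt.norm_natCast_eq_one_iff]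
    exact (hp.coprime_iff_not_dvd).2 (Nat.not_dvd_of_pos_of_lt (by omega) (by omega))
  choose! v hv using hinv
  set U : ℤ_[p]⟦X⟧ := mk fun i => if i < p - 1 then (-1) ^ i * v i else 0 with hU
  have hp1 : 0 < p - 1 := by have := hp.two_le; omega
  have hU0 : constantCoeff U = ((1 : ℤ_[p]ˣ) : ℤ_[p]) := by
    have := hv 0 hp1
    simp only [zero_add, Nat.cast_one, one_mul] at this
    rw [← coeff_zero_eq_constantCoeff_apply, hU, coeff_mk, if_pos hp1, this]
    simp
  set W := invOfUnit U 1
  have hUW : U * W = 1 := mul_invOfUnit U 1 hU0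
  refine ⟨coeff j (W ^ j), ?_, ?_⟩
  · obtain ⟨L, hL⟩ : X ∣ log ℚ := X_dvd_iff.2 constantCoeff_log
    have hLcoeff : ∀ i, coeff i L = (-1 : ℚ) ^ i / (i + 1 : ℕ) := by
      intro i
      have := congrArg (coeff (i + 1)) hL
      rw [coeff_succ_X_mul, coeff_log, if_neg (by omega)] at this
      rw [← this, pow_add _ i 2]
      simp
    have hL0 : constantCoeff L ≠ 0 := by
      rw [← coeff_zero_eq_constantCoeff_apply, hLcoeff]
      simp
    have hLY : L * L⁻¹ = 1 := PowerSeries.mul_inv_cancel L hL0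
    have hY : log ℚ * L⁻¹ = X := by rw [hL, mul_assoc, hLY, mul_one]
    rw [← coeff_pow_eq_bernoulli'_div_factorial hY j]
    set f := map (PadicInt.Coe.ringHom (p := p))
    set g := map (Rat.castHom ℚ_[p])
    have hUW' : f U * f W = 1 := by rw [← map_mul, hUW, map_one]
    have hLY' : g L * g L⁻¹ = 1 := by rw [← map_mul, hLY, map_one]
    have hdvd : X ^ (p - 1) ∣ g L - f U := by
      rw [X_pow_dvd_iff]
      intro i hi
      have := congrArg (PadicInt.Coe.ringHom (p := p)) (hv i hi)
      rw [map_mul, map_natCast, map_one] at this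
      have hne : ((i + 1 : ℕ) : ℚ_[p]) ≠ 0 := left_ne_zero_of_mul_eq_one this
      rw [map_sub, coeff_map, coeff_map, hLcoeff, hU, coeff_mk, if_pos hi, map_mul, map_pow,
        map_neg, map_one, eq_inv_of_mul_eq_one_right this]
      simp [div_eq_mul_inv]
    have hdvd' : X ^ (p - 1) ∣ f W ^ j - g L⁻¹ ^ j := by
      refine dvd_trans ?_ (sub_dvd_pow_sub_pow _ _ _)
      have : f W - g L⁻¹ = f W * g L⁻¹ * (g L - f U) := by
        linear_combination g L⁻¹ * hUW' - f W * hLY'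
      rw [this]
      exact hdvd.mul_left _
    have := X_pow_dvd_iff.1 hdvd' j hj
    rw [← map_pow, ← map_pow, map_sub, coeff_map, coeff_map, sub_eq_zero] at this
    exact this
  · set f := map (PadicInt.toZMod (p := p))
    set G := (binomQuot p).map (Int.castRingHom (ZMod p)) with hG
    have hUG : f U = (G : (ZMod p)⟦X⟧) := by
      ext i
      rw [coeff_map, hU, coeff_mk, Polynomial.coeff_coe, hG, Polynomial.coeff_map]
      split_ifs with hi
      · have h1 := congrArg (PadicInt.toZMod (p := p)) (hv i hi)
        rw [map_mul, map_natCast, map_one] at h1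
        have h2 := ZMod.coeff_binomQuot (p := p) hi
        rw [map_mul, map_pow, map_neg, map_one, eq_intCast, ← h2]
        linear_combination (((binomQuot p).coeff i : ℤ) : ZMod p) * h1
      · simp [binomQuot.coeff_eq, hi]
    obtain ⟨r, hr⟩ := hK
    have hdvd : (X : (ZMod p)⟦X⟧) ^ p ∣ (G : (ZMod p)⟦X⟧) ^ (K + j) - 1 := by
      obtain ⟨q, hq⟩ := X_pow_dvd_binomQuot_pow_sub_one (p := p) r
      refine ⟨q, ?_⟩
      rw [hr]
      have := congrArg Polynomial.toPowerSeries hq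
      rwa [Polynomial.coe_sub, Polynomial.coe_mul, Polynomial.coe_pow, Polynomial.coe_pow,
        Polynomial.coe_X, Polynomial.coe_one] at this
    have hUW' : (G : (ZMod p)⟦X⟧) ^ j * f W ^ j = 1 := by
      rw [← hUG, ← mul_pow, ← map_mul, hUW, map_one, one_pow]
    have heq : ((G ^ K : Polynomial (ZMod p)) : (ZMod p)⟦X⟧) - f W ^ j =
        ((G : (ZMod p)⟦X⟧) ^ (K + j) - 1) * f W ^ j := by
      rw [Polynomial.coe_pow, pow_add]
      linear_combination -(G : (ZMod p)⟦X⟧) ^ K * hUW'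
    have := X_pow_dvd_iff.1 (heq ▸ hdvd.mul_right (f W ^ j)) j (by omega)
    rw [map_sub, Polynomial.coeff_coe, ← map_pow, coeff_map, sub_eq_zero, hG,
      ← Polynomial.map_pow, Polynomial.coeff_map] at this
    exact this.symm

end

theorem not_pow_dvd_add_mul_pred {p i j : ℕ} (hj2 : 2 ≤ j) (hj : j < p - 1) :
    ¬p ^ (i + 1) ∣ j + (i + 1) * (p - 1) := by
  obtain ⟨r, hr⟩ : ∃ r, p = r + 1 := ⟨p - 1, by omega⟩
  rw [show p - 1 = r by omega] at hj ⊢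
  cases i with
  | zero =>
    rw [zero_add, pow_one, one_mul]
    rintro ⟨c, hc⟩
    have h1 : 1 < c := by
      by_contra hlt
      have := Nat.mul_le_mul_left p (not_lt.1 hlt)
      omega
    have := Nat.mul_le_mul_left p h1
    omega
  | succ i =>
    refine Nat.not_dvd_of_pos_of_lt (by omega) ?_
    have hle : ∀ i, (i + 3) * r ≤ p ^ (i + 2) := by
      intro i
      induction i with
      | zero =>
        rw [hr]
        ring_nf
        nlinarith
      | succ i ih =>
        calc (i + 1 + 3) * r ≤ (i + 3) * r * 2 := by nlinarith
          _ ≤ (i + 3) * r * p := Nat.mul_le_mul_left _ (by omega)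
          _ ≤ p ^ (i + 2) * p := Nat.mul_le_mul_right p ih
          _ = p ^ (i + 1 + 2) := by ring
    refine lt_of_lt_of_le ?_ (hle i)
    linarith

section

variable {p : ℕ} [Fact p.Prime]

theorem Padic.norm_pow_mul_div_lt_one {i : ℕ} {d : ℤ} (z : ℤ) (hd : ¬(p : ℤ) ^ i ∣ d) :
    ‖((p : ℚ_[p]) ^ i * z / d)‖ < 1 := by
  have hlt : ‖(p : ℚ_[p]) ^ i‖ < ‖(d : ℚ_[p])‖ := by
    rw [Padic.norm_p_pow]
    exact not_le.1 fun hle => hd ((Padic.norm_int_le_pow_iff_dvd d i).1 hle)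
  rw [norm_div, norm_mul, div_lt_one ((norm_nonneg _).trans_lt hlt)]
  exact (mul_le_of_le_one_right (norm_nonneg _) (Padic.norm_int_le_one z)).trans_lt hlt

theorem Padic.norm_sum_lt_one {ι : Type*} {s : Finset ι} {f : ι → ℚ_[p]}
    (hf : ∀ i ∈ s, ‖f i‖ < 1) : ‖∑ i ∈ s, f i‖ < 1 :=
  sum_induction f (‖·‖ < 1)
    (fun _ _ ha hb => (Padic.nonarchimedean _ _).trans_lt (max_lt ha hb)) (by simp) hf

theorem Padic.norm_sub_lt_one {x y : ℚ_[p]} (hx : ‖x‖ < 1) (hy : ‖y‖ < 1) : ‖x - y‖ < 1 := by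
  rw [sub_eq_add_neg]
  exact (Padic.nonarchimedean _ _).trans_lt (max_lt hx (by rwa [norm_neg]))

open PowerSeries in
theorem norm_fleckSum_div_add_lt_one {N e j : ℕ} (hodd : Odd p) (hN : 0 < N) (heven : Even N)
    (hj2 : 2 ≤ j) (hj : j < p - 1) (he : (e + 1) * (p - 1) = N + j) :
    ‖((fleckSum p N / (N * (-p) ^ e) + ((binomQuot p ^ (e + 1)).coeff j : ℤ) / (e + 1 : ℕ) : ℚ) :
      ℚ_[p])‖ < 1 := by
  have hp : p.Prime := Fact.out
  have hp0 : (-p : ℚ) ≠ 0 := neg_ne_zero.2 (by exact_mod_cast hp.ne_zero)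
  set H : ℚ⟦X⟧ := (((Polynomial.X * binomQuot p).map (Int.castRingHom ℚ) : Polynomial ℚ) : ℚ⟦X⟧)
    with hH
  have hXH : X ∣ H := by
    rw [hH, Polynomial.map_mul, Polynomial.map_X, Polynomial.coe_mul, Polynomial.coe_X]
    exact dvd_mul_right _ _
  have hpH : (p : ℚ⟦X⟧) * H = (1 + X) ^ p - X ^ p - 1 := by
    have := congrArg (fun f : Polynomial ℤ =>
      Polynomial.coeToPowerSeries.ringHom (f.map (Int.castRingHom ℚ))) (binomQuot.mul_X_mul hp)
    rw [Polynomial.map_mul, map_mul, Polynomial.map_natCast, map_natCast] at this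
    simpa [hH] using this
  have hcoeff : ∀ k, coeff N (H ^ k) = ((((Polynomial.X * binomQuot p) ^ k).coeff N : ℤ) : ℚ) := by
    intro k
    rw [hH, ← Polynomial.coe_pow, Polynomial.coeff_coe, ← Polynomial.map_pow,
      Polynomial.coeff_map, eq_intCast]
  have hlt : e * (p - 1) < N := by
    rw [add_one_mul] at he
    omega
  have heN : e ≤ N := (Nat.le_mul_of_pos_right e (by omega)).trans hlt.le
  have hlow : ∑ k ∈ range e, (-p : ℚ) ^ k * (coeff N (H ^ (k + 1)) / (k + 1)) = 0 := by
    refine sum_eq_zero fun k hk => ?_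
    have hk : k + 1 ≤ e := mem_range.1 hk
    rw [hcoeff, binomQuot.coeff_X_mul_pow_of_lt hp
      ((Nat.mul_le_mul_right _ hk).trans_lt hlt)]
    simp
  have hexp : (fleckSum p N / (N * (-p) ^ e) + ((binomQuot p ^ (e + 1)).coeff j : ℤ) / (e + 1 : ℕ) :
      ℚ) = -∑ i ∈ range (N - e),
        (-p : ℚ) ^ (i + 1) * (coeff N (H ^ (e + (i + 1) + 1)) / ((e + (i + 1) : ℕ) + 1)) := by
    rw [fleckSum_eq_sum_coeff hodd hN heven hXH hpH, show N + 1 = e + (N - e + 1) by omega,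
      sum_range_add, hlow, sum_range_succ']
    simp only [hcoeff, add_zero]
    rw [binomQuot.coeff_X_mul_pow hp he]
    have hN0 : (N : ℚ) ≠ 0 := by positivity
    simp only [pow_add _ e, mul_assoc, ← mul_sum]
    field_simp
    push_cast
    ring
  rw [hexp, Rat.cast_neg, norm_neg, Rat.cast_sum]
  refine Padic.norm_sum_lt_one fun i _ => ?_
  obtain ⟨J, hJ⟩ : ∃ J, j + (i + 1) * (p - 1) = J + 1 := ⟨j + (i + 1) * (p - 1) - 1, by omega⟩
  have hK : (e + (i + 1) + 1) * (p - 1) = N + (J + 1) := by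
    rw [← hJ]
    linear_combination he
  have hquot := binomQuot.mul_coeff_pow p (e + (i + 1)) J
  set d := (binomQuot p ^ (e + (i + 1)) * Polynomial.derivative (binomQuot p)).coeff J
  rw [hcoeff, binomQuot.coeff_X_mul_pow hp hK]
  have hdvd : ¬(p : ℤ) ^ (i + 1) ∣ ((J + 1 : ℕ) : ℤ) := by
    have := not_pow_dvd_add_mul_pred (i := i) hj2 hj
    rw [hJ] at this
    exact_mod_cast this
  convert Padic.norm_pow_mul_div_lt_one ((-1) ^ (i + 1) * d) hdvd using 2
  have hquot' := congrArg (Int.cast : ℤ → ℚ_[p]) hquot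
  rw [Int.cast_mul, Int.cast_mul, Int.cast_natCast, Int.cast_natCast] at hquot'
  have h1 : ((J + 1 : ℕ) : ℚ_[p]) ≠ 0 := Nat.cast_ne_zero.2 (Nat.succ_ne_zero _)
  have h2 : ((e + (i + 1) + 1 : ℕ) : ℚ_[p]) ≠ 0 := Nat.cast_ne_zero.2 (Nat.succ_ne_zero _)
  have h3 : (((binomQuot p ^ (e + (i + 1) + 1)).coeff (J + 1) : ℤ) : ℚ_[p]) /
      ((e + (i + 1) + 1 : ℕ) : ℚ_[p]) = d / ((J + 1 : ℕ) : ℚ_[p]) := by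
    rw [div_eq_div_iff h2 h1]
    linear_combination hquot'
  rw [Rat.cast_mul, Rat.cast_div, Rat.cast_intCast, ← Nat.cast_succ, Rat.cast_natCast, h3,
    Rat.cast_pow, Rat.cast_neg, Rat.cast_natCast, neg_pow, Int.cast_mul, Int.cast_pow,
    Int.cast_neg, Int.cast_one, Int.cast_natCast]
  ring

end

theorem modCong_one_of_norm_lt_one {p : ℕ} [Fact p.Prime] {x y : ℚ}
    (hxy : ‖((x - y : ℚ) : ℚ_[p])‖ < 1) : modCong p 1 x y := by
  have hp : p.Prime := Fact.out
  refine or_iff_not_imp_left.2 fun hne => ?_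
  rw [Padic.eq_padicNorm, padicNorm.eq_zpow_of_nonzero (sub_ne_zero.2 hne)] at hxy
  have hlt : (p : ℚ) ^ (-padicValRat p (x - y)) < (p : ℚ) ^ (0 : ℤ) := by
    rw [zpow_zero]
    exact_mod_cast hxy
  have := (zpow_lt_zpow_iff_right₀ (by exact_mod_cast hp.one_lt)).1 hlt
  omega

theorem nLow_eq {p n : ℕ} (hp : 0 < p) (hn : 0 < n) : nLow p n = (n - 1) % (p - 1) + 1 := by
  obtain ⟨a, rfl⟩ : ∃ a, n = a + 1 := ⟨n - 1, by omega⟩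
  obtain ⟨r, rfl⟩ : ∃ r, p = r + 1 := ⟨p - 1, by omega⟩
  rw [nLow, Nat.cast_succ, Nat.cast_succ, add_sub_cancel_right, add_sub_cancel_right,
    Nat.add_sub_cancel, Nat.add_sub_cancel]
  exact_mod_cast Int.toNat_natCast (a % r + 1)

theorem factorial_mul_stirling2 (M N : ℕ) :
    (N.factorial : ℚ) * stirling2 M N =
      ((∑ j ∈ range (N + 1), (-1) ^ (N - j) * (N.choose j : ℤ) * (j : ℤ) ^ M : ℤ) : ℚ) := by
  rw [stirling2, ← mul_assoc, mul_one_div_cancel (by exact_mod_cast N.factorial_ne_zero), one_mul]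
  push_cast
  rfl

/-- The normalised Fleck sum of order `N` with `(e + 1) (p - 1) = N + j` modulo `p`. -/
theorem norm_fleckSum_div_sub_lt_one {p : ℕ} [Fact p.Prime] {N e s j : ℕ} (hodd : Odd p)
    (hN : 0 < N) (heven : Even N) (hsj : s + j + 1 = p) (hs : 0 < s) (hj2 : 2 ≤ j)
    (hjeven : Even j) (he : (e + 1) * (p - 1) = N + j) (hdvd : p ∣ e + 1 + j) :
    ‖((fleckSum p N / (N * (-p) ^ e) - (s.factorial : ℚ) / (s + 1) * bernoulli j : ℚ) :
      ℚ_[p])‖ < 1 := by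
  have hp : p.Prime := Fact.out
  have hj : j < p - 1 := by omega
  obtain ⟨w, hw, hwmod⟩ := exists_padicInt_eq_bernoulli' (p := p) hj hdvd
  have hmain := norm_fleckSum_div_add_lt_one hodd hN heven hj2 hj he
  set g := (binomQuot p ^ (e + 1)).coeff j
  have hs1 : ‖((s + 1 : ℕ) : ℤ_[p])‖ = 1 := by
    rw [PadicInt.norm_natCast_eq_one_iff]
    exact (hp.coprime_iff_not_dvd).2 (Nat.not_dvd_of_pos_of_lt (by omega) (by omega))
  have he1 : ‖((e + 1 : ℕ) : ℤ_[p])‖ = 1 := by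
    rw [PadicInt.norm_natCast_eq_one_iff]
    exact (hp.coprime_iff_not_dvd).2 fun hd =>
      Nat.not_dvd_of_pos_of_lt (by omega) (by omega) ((Nat.dvd_add_right hd).1 hdvd)
  set v : ℤ_[p] := g * (s + 1 : ℕ) + (e + 1 : ℕ) * (s.factorial * j.factorial * w)
  have hv : ‖v‖ < 1 := by
    rw [← PadicInt.mem_nonunits, ← IsLocalRing.mem_maximalIdeal, ← PadicInt.ker_toZMod,
      RingHom.mem_ker]
    have hfac := ZMod.factorial_mul_factorial_eq_neg_one (p := p) hsj hjeven
    have h1 : ((e + 1 + j : ℕ) : ZMod p) = 0 := (ZMod.natCast_eq_zero_iff _ _).2 hdvd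
    have h2 : ((s + j + 1 : ℕ) : ZMod p) = 0 := by rw [hsj]; exact ZMod.natCast_self p
    simp only [v, map_add, map_mul, map_natCast, map_intCast, hwmod]
    push_cast at h1 h2 ⊢
    linear_combination ((e : ZMod p) + 1) * g * hfac + g * h2 - g * h1
  have hRHS : (((s.factorial : ℚ) / (s + 1) * bernoulli j + g / (e + 1 : ℕ) : ℚ) : ℚ_[p]) =
      (v : ℚ_[p]) / (((s + 1 : ℕ) : ℤ_[p]) * ((e + 1 : ℕ) : ℤ_[p]) : ℤ_[p]) := by
    have hs0 : ((s : ℚ_[p]) + 1) ≠ 0 := by exact_mod_cast s.succ_ne_zero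
    have he0 : ((e : ℚ_[p]) + 1) ≠ 0 := by exact_mod_cast e.succ_ne_zero
    have hj0 : (j.factorial : ℚ_[p]) ≠ 0 := by exact_mod_cast j.factorial_ne_zero
    rw [bernoulli_eq_bernoulli'_of_ne_one (by omega)]
    simp only [v]
    push_cast at hw ⊢
    rw [hw]
    field_simp
    ring
  have hsub : (fleckSum p N / (N * (-p) ^ e) - (s.factorial : ℚ) / (s + 1) * bernoulli j : ℚ) =
      (fleckSum p N / (N * (-p) ^ e) + g / (e + 1 : ℕ)) -
        ((s.factorial : ℚ) / (s + 1) * bernoulli j + g / (e + 1 : ℕ)) := by ring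
  rw [hsub, Rat.cast_sub]
  refine Padic.norm_sub_lt_one hmain ?_
  rw [hRHS, norm_div, ← PadicInt.norm_def, ← PadicInt.norm_def, norm_mul, hs1, he1]
  simpa using hv

theorem norm_pow_mul_div_lt_one_of_two_mul_lt {p : ℕ} [Fact p.Prime] {n e b : ℕ} (hn : 0 < n)
    (hne : n ≤ e) (hb : 2 * e < b) (z : ℤ) :
    ‖((p ^ b * z / (p * n * (-p) ^ e) : ℚ) : ℚ_[p])‖ < 1 := by
  have hp : p.Prime := Fact.out
  obtain ⟨c, rfl⟩ : ∃ c, b = c + 1 + e := ⟨b - 1 - e, by omega⟩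
  have hdvd : ¬(p : ℤ) ^ c ∣ (n : ℤ) := by
    have : ¬p ^ c ∣ n := Nat.not_dvd_of_pos_of_lt hn
      ((show n ≤ c by omega).trans_lt (Nat.lt_pow_self hp.one_lt))
    exact_mod_cast this
  convert Padic.norm_pow_mul_div_lt_one ((-1) ^ e * z) hdvd using 2
  have hp0 : (p : ℚ_[p]) ≠ 0 := by exact_mod_cast hp.ne_zero
  have hn0 : (n : ℚ_[p]) ≠ 0 := by exact_mod_cast hn.ne'
  have hsq : ((-1 : ℚ_[p]) ^ e) * (-1) ^ e = 1 := by rw [← mul_pow]; simp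
  push_cast
  rw [neg_pow (p : ℚ_[p]), pow_add, pow_succ]
  have h1 : (-1 : ℚ_[p]) ^ e ≠ 0 := left_ne_zero_of_mul_eq_one hsq
  rw [div_eq_div_iff (by positivity) hn0]
  linear_combination -(p : ℚ_[p]) ^ c * p * p ^ e * n * z * hsq

theorem stmt7 (p n b m : ℕ) (hp : p.Prime) (hodd : Odd p) (hn : 0 < n) (heven : Even n)
    (h : ¬ (p - 1) ∣ n) (hb : 0 < b) (hm : 0 < m) (hb2 : 2 * ((p*n-1)/(p-1)) < b) :
    modCong p 1
      ((2 / ((p:ℚ) * (n:ℚ))) * ((p*n-1).factorial : ℚ) *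
          stirling2 (m * Nat.totient (p^b)) (p*n-1) / (-(p:ℚ))^((p*n-2)/(p-1)))
      (-(((p*n-1).factorial : ℚ) *
          stirling2 (m * Nat.totient (p^b)) (p*n) / (-(p:ℚ))^((p*n-1)/(p-1)))) ∧
    modCong p 1
      (-(((p*n-1).factorial : ℚ) *
          stirling2 (m * Nat.totient (p^b)) (p*n) / (-(p:ℚ))^((p*n-1)/(p-1))))
      (((nLow p n).factorial : ℚ) / ((nLow p n : ℚ) + 1) * bernoulli (p - 1 - nLow p n)) := by
  have : Fact p.Prime := ⟨hp⟩
  have hp2 := hp.two_le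
  set s := nLow p n with hs
  obtain ⟨f, hf⟩ : ∃ f, n = s + (p - 1) * f := by
    refine ⟨(n - 1) / (p - 1), ?_⟩
    have := Nat.mod_add_div (n - 1) (p - 1)
    rw [hs, nLow_eq hp.pos hn]
    omega
  have hs0 : 0 < s := by rw [hs, nLow_eq hp.pos hn]; omega
  have hsle : s ≤ p - 1 := by
    rw [hs, nLow_eq hp.pos hn]
    exact Nat.mod_lt _ (by omega)
  have hsne : s ≠ p - 1 := fun heq => h ⟨f + 1, by rw [hf, heq]; ring⟩
  have hpeven : Even (p - 1) := by
    obtain ⟨k, hk⟩ := hodd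
    exact ⟨k, by omega⟩
  have hseven : Even s := by
    rw [hf] at heven
    exact (Nat.even_add.1 heven).2 (hpeven.mul_right f)
  obtain ⟨j, hj⟩ : ∃ j, p - 1 = s + j := ⟨p - 1 - s, by omega⟩
  have hjeven : Even j := by
    rw [hj] at hpeven
    exact (Nat.even_add.1 hpeven).1 hseven
  have hj2 : 2 ≤ j := by
    obtain ⟨k, hk⟩ := hjeven
    omega
  have hs2 : 2 ≤ s := by
    obtain ⟨k, hk⟩ := hseven
    omega
  have hN : 0 < p * n := Nat.mul_pos hp.pos hn
  have hNe : p * n = (p - 1) * (s + p * f) + s := by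
    rw [hf]
    obtain ⟨r, hr⟩ : ∃ r, p = r + 1 := ⟨p - 1, by omega⟩
    rw [hr, Nat.add_sub_cancel]
    ring
  have he1 : (p * n - 1) / (p - 1) = s + p * f := by
    rw [hNe, Nat.add_sub_assoc hs0, Nat.mul_add_div (by omega), Nat.div_eq_of_lt (by omega),
      add_zero]
  have he2 : (p * n - 2) / (p - 1) = s + p * f := by
    rw [hNe, Nat.add_sub_assoc hs2, Nat.mul_add_div (by omega), Nat.div_eq_of_lt (by omega),
      add_zero]
  rw [he1] at hb2 ⊢
  rw [he2, show p - 1 - s = j by omega]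
  set e := s + p * f with he
  have hne : n ≤ e := by
    rw [hf, he]
    exact Nat.add_le_add_left (Nat.mul_le_mul_right f (Nat.sub_le p 1)) s
  have hmain := norm_fleckSum_div_sub_lt_one (p := p) (N := p * n) (e := e) (s := s) (j := j) hodd
    hN (heven.mul_left p) (by omega) hs0 hj2 hjeven (by linear_combination hj - hNe)
    ⟨f + 1, by rw [he, mul_add_one]; omega⟩
  have herr := norm_pow_mul_div_lt_one_of_two_mul_lt (p := p) hn hne hb2
  obtain ⟨z₁, hz₁⟩ := pow_dvd_sum_add_fleckSum (b := b) (N := p * n - 1) hp hm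
    (by have := Nat.mul_le_mul hp2 hn; omega)
  obtain ⟨z₂, hz₂⟩ := pow_dvd_sum_add_fleckSum (b := b) hp hm hN
  have hpred : Odd (p * n - 1) := Nat.Even.sub_odd hN (heven.mul_left p) odd_one
  rw [hpred.neg_one_pow] at hz₁
  rw [(heven.mul_left p).neg_one_pow] at hz₂
  have hz₁' := congrArg (Int.cast : ℤ → ℚ) hz₁
  have hz₂' := congrArg (Int.cast : ℤ → ℚ) hz₂
  have htwo := congrArg (Int.cast : ℤ → ℚ) (two_mul_fleckSum_pred hN (heven.mul_left p)
    (dvd_mul_right p n))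
  rw [Int.cast_add, ← factorial_mul_stirling2] at hz₁' hz₂'
  have hfac : ((p * n).factorial : ℚ) = p * n * (p * n - 1).factorial := by
    rw [← Nat.mul_factorial_pred hN.ne']
    push_cast
    ring
  rw [hfac] at hz₂'
  push_cast at hz₁' hz₂' htwo
  rw [Nat.cast_mul] at hmain
  have hp0 : (p : ℚ) ≠ 0 := by exact_mod_cast hp.ne_zero
  have hn0 : (n : ℚ) ≠ 0 := by exact_mod_cast hn.ne'
  have hpe : (-(p : ℚ)) ^ e ≠ 0 := pow_ne_zero _ (neg_ne_zero.2 hp0)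
  set S₁ := stirling2 (m * Nat.totient (p ^ b)) (p * n - 1)
  set S₂ := stirling2 (m * Nat.totient (p ^ b)) (p * n)
  set F := ((p * n - 1).factorial : ℚ)
  have hexp₁ : 2 / ((p : ℚ) * n) * F * S₁ / (-p) ^ e =
      fleckSum p (p * n) / (p * n * (-p) ^ e) + p ^ b * (2 * z₁) / (p * n * (-p) ^ e) := by
    rw [← add_div, div_mul_eq_mul_div, div_mul_eq_mul_div, div_div]
    congr 1
    linear_combination 2 * hz₁' + htwo
  have hexp₂ : -(F * S₂ / (-p : ℚ) ^ e) =
      fleckSum p (p * n) / (p * n * (-p) ^ e) - p ^ b * z₂ / (p * n * (-p) ^ e) := by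
    rw [← sub_div, eq_div_iff (by positivity), ← neg_div, div_mul_eq_mul_div,
      div_eq_iff hpe]
    linear_combination -(-p : ℚ) ^ e * hz₂'
  rw [hexp₁, hexp₂]
  constructor
  · refine modCong_one_of_norm_lt_one ?_
    convert herr (2 * z₁ + z₂) using 3
    push_cast
    ring
  · refine modCong_one_of_norm_lt_one ?_
    rw [sub_right_comm, Rat.cast_sub]
    exact Padic.norm_sub_lt_one hmain (herr z₂)
end
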